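/- arXiv:2103.03134 — 3 statements merged into one kernel-verified Lean document; each statement's English description precedes it below -/
import Mathlib

section
/- Fix T > 0, R > 0, an integer γ ≥ 2, constants θ > 0, β > 0, and a point (t̄, x̄) ∈ [0,T] × ℝ^d with ‖x̄‖ < R. Let u, w : [0,T] × ℝ^d → ℝ be continuous and assume that u − w attains its maximum over [0,T] × B̄_R at (t̄, x̄). For ε > 0 define Φ_ε(t,x,y) = u(t,x) − w(t,y) − (1/(2ε))‖x−y‖^{2γ} − θ(‖x−x̄‖^{2γ+2} + ‖y−x̄‖^{2γ+2}) − β(t−t̄)² for (t,x,y) ∈ [0,T] × B̄_R × B̄_R. Let (ε_n) be positive reals with ε_n → 0 and (t_n, x_n, y_n) maximizers of Φ_{ε_n} over [0,T] × B̄_R × B̄_R. Then (t_n, x_n, y_n) → (t̄, x̄, x̄) as n → ∞, and Φ_{ε_n}(t_n, x_n, y_n) → u(t̄, x̄) − w(t̄, x̄). -/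
open Set Filter

/-- Step (5.36) of the comparison proof: if `u − w` attains its maximum over `[0,T] × B̄_R`
at `(t̄, x̄)`, then the maximizers `(t_n, x_n, y_n)` of the penalized functions `Φ_{ε_n}`
converge to `(t̄, x̄, x̄)` and the penalized maxima converge to `(u − w)(t̄, x̄)`. -/
theorem stmt_9 {d : ℕ} (T R : ℝ) (hT : 0 < T) (hR : 0 < R) (γ : ℕ) (hγ : 2 ≤ γ)
    (θ β : ℝ) (hθ : 0 < θ) (hβ : 0 < β)
    (tb : ℝ) (xb : EuclideanSpace ℝ (Fin d)) (htb : tb ∈ Icc (0 : ℝ) T) (hxb : ‖xb‖ < R)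
    (u w : ℝ × EuclideanSpace ℝ (Fin d) → ℝ)
    (hu : ContinuousOn u (Icc 0 T ×ˢ (univ : Set (EuclideanSpace ℝ (Fin d)))))
    (hw : ContinuousOn w (Icc 0 T ×ˢ (univ : Set (EuclideanSpace ℝ (Fin d)))))
    (hmax : ∀ t ∈ Icc (0 : ℝ) T, ∀ x ∈ Metric.closedBall (0 : EuclideanSpace ℝ (Fin d)) R,
      u (t, x) - w (t, x) ≤ u (tb, xb) - w (tb, xb))
    (Φ : ℝ → ℝ × EuclideanSpace ℝ (Fin d) × EuclideanSpace ℝ (Fin d) → ℝ)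
    (hΦ : ∀ (ε : ℝ) (p : ℝ × EuclideanSpace ℝ (Fin d) × EuclideanSpace ℝ (Fin d)),
      Φ ε p = u (p.1, p.2.1) - w (p.1, p.2.2) - (1 / (2 * ε)) * ‖p.2.1 - p.2.2‖ ^ (2 * γ)
        - θ * (‖p.2.1 - xb‖ ^ (2 * γ + 2) + ‖p.2.2 - xb‖ ^ (2 * γ + 2))
        - β * (p.1 - tb) ^ 2)
    (D : Set (ℝ × EuclideanSpace ℝ (Fin d) × EuclideanSpace ℝ (Fin d)))
    (hD : D = Icc (0 : ℝ) T ×ˢ Metric.closedBall (0 : EuclideanSpace ℝ (Fin d)) R ×ˢ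
      Metric.closedBall (0 : EuclideanSpace ℝ (Fin d)) R)
    (ε : ℕ → ℝ) (hεpos : ∀ n, 0 < ε n) (hε0 : Tendsto ε atTop (nhds 0))
    (p : ℕ → ℝ × EuclideanSpace ℝ (Fin d) × EuclideanSpace ℝ (Fin d))
    (hpD : ∀ n, p n ∈ D) (hpmax : ∀ n, ∀ q ∈ D, Φ (ε n) q ≤ Φ (ε n) (p n)) :
    Tendsto p atTop (nhds (tb, xb, xb)) ∧
      Tendsto (fun n => Φ (ε n) (p n)) atTop (nhds (u (tb, xb) - w (tb, xb))) := by
  set F : ℝ × EuclideanSpace ℝ (Fin d) × EuclideanSpace ℝ (Fin d) → ℝ := fun p =>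
    u (p.1, p.2.1) - w (p.1, p.2.2)
      - θ * (‖p.2.1 - xb‖ ^ (2 * γ + 2) + ‖p.2.2 - xb‖ ^ (2 * γ + 2))
      - β * (p.1 - tb) ^ 2 with hF
  have hΦF : ∀ e q, Φ e q = F q - (1 / (2 * e)) * ‖q.2.1 - q.2.2‖ ^ (2 * γ) := by
    intro e q
    rw [hΦ]
    simp only [hF]
    ring
  have hbD : (tb, xb, xb) ∈ D := by
    rw [hD]
    refine ⟨htb, ?_, ?_⟩ <;> simpa using hxb.le
  have hFb : F (tb, xb, xb) = u (tb, xb) - w (tb, xb) := by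
    simp [hF]
  have hDc : IsCompact D := by
    rw [hD]
    exact isCompact_Icc.prod ((isCompact_closedBall _ _).prod (isCompact_closedBall _ _))
  have hFc : ContinuousOn F D := by
    have h1 : ContinuousOn (fun p : ℝ × EuclideanSpace ℝ (Fin d) × EuclideanSpace ℝ (Fin d) =>
        u (p.1, p.2.1)) D := by
      refine hu.comp (by fun_prop) ?_
      intro q hq
      rw [hD] at hq
      exact ⟨hq.1, mem_univ _⟩
    have h2 : ContinuousOn (fun p : ℝ × EuclideanSpace ℝ (Fin d) × EuclideanSpace ℝ (Fin d) =>
        w (p.1, p.2.2)) D := by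
      refine hw.comp (by fun_prop) ?_
      intro q hq
      rw [hD] at hq
      exact ⟨hq.1, mem_univ _⟩
    refine ((h1.sub h2).sub ?_).sub ?_
    · fun_prop
    · fun_prop
  have hlow : ∀ n, u (tb, xb) - w (tb, xb) ≤ Φ (ε n) (p n) := by
    intro n
    have h := hpmax n _ hbD
    rw [hΦF, hFb] at h
    simpa [show γ ≠ 0 by omega] using h
  have hup : ∀ n, Φ (ε n) (p n) ≤ F (p n) := by
    intro n
    rw [hΦF]
    have := hεpos n
    have : 0 ≤ (1 / (2 * ε n)) * ‖(p n).2.1 - (p n).2.2‖ ^ (2 * γ) := by positivity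
    linarith
  obtain ⟨C, hC⟩ := hDc.bddAbove_image hFc
  have hpow : Tendsto (fun n => ‖(p n).2.1 - (p n).2.2‖ ^ (2 * γ)) atTop (nhds 0) := by
    have h0 : Tendsto (fun n => (2 * ε n) * (C - (u (tb, xb) - w (tb, xb)))) atTop (nhds 0) := by
      simpa using (hε0.const_mul 2).mul_const (C - (u (tb, xb) - w (tb, xb)))
    refine squeeze_zero (fun n => by positivity) (fun n => ?_) h0
    have h1 := hlow n
    rw [hΦF] at h1
    have h2 : F (p n) ≤ C := hC ⟨_, hpD n, rfl⟩
    have h3 := hεpos n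
    have h4 : (1 / (2 * ε n)) * ‖(p n).2.1 - (p n).2.2‖ ^ (2 * γ)
        ≤ C - (u (tb, xb) - w (tb, xb)) := by linarith
    rw [one_div, inv_mul_le_iff₀ (by positivity)] at h4
    exact h4
  have hconv : Tendsto p atTop (nhds (tb, xb, xb)) := by
    refine tendsto_of_subseq_tendsto fun ns hns => ?_
    obtain ⟨q, hq, φ, hφ, hlim⟩ := hDc.tendsto_subseq (fun n => hpD (ns n))
    refine ⟨φ, ?_⟩
    have hsub : Tendsto (fun n => ns (φ n)) atTop atTop := hns.comp hφ.tendsto_atTop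
    have hlim2 : Tendsto (fun n => p (ns (φ n))) atTop (nhds q) := hlim
    have hdiag : ‖q.2.1 - q.2.2‖ ^ (2 * γ) = 0 := by
      have hc : Continuous (fun q : ℝ × EuclideanSpace ℝ (Fin d) × EuclideanSpace ℝ (Fin d) =>
        ‖q.2.1 - q.2.2‖ ^ (2 * γ)) := by fun_prop
      exact tendsto_nhds_unique ((hc.tendsto q).comp hlim2) (hpow.comp hsub)
    have hxy : q.2.1 = q.2.2 := by
      have := eq_zero_of_pow_eq_zero hdiag
      exact sub_eq_zero.mp (norm_eq_zero.mp this)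
    have hFq : u (tb, xb) - w (tb, xb) ≤ F q := by
      have hw' : Tendsto (fun n => p (ns (φ n))) atTop (nhdsWithin q D) :=
        tendsto_nhdsWithin_iff.mpr ⟨hlim2, Eventually.of_forall fun n => hpD _⟩
      have ht : Tendsto (fun n => F (p (ns (φ n)))) atTop (nhds (F q)) := (hFc q hq).tendsto.comp hw'
      exact ge_of_tendsto' ht fun n => (hlow _).trans (hup _)
    have hqeq : q = (tb, xb, xb) := by
      obtain ⟨t, x, y⟩ := q
      simp only at hxy
      subst hxy
      rw [hD] at hq
      have hm := hmax t hq.1 x hq.2.1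
      simp only [hF] at hFq
      have a1 : 0 ≤ θ * (‖x - xb‖ ^ (2 * γ + 2) + ‖x - xb‖ ^ (2 * γ + 2)) := by positivity
      have a2 : 0 ≤ β * (t - tb) ^ 2 := by positivity
      have b1 : θ * (‖x - xb‖ ^ (2 * γ + 2) + ‖x - xb‖ ^ (2 * γ + 2)) = 0 := by linarith
      have b2 : β * (t - tb) ^ 2 = 0 := by linarith
      have c2 : t = tb := by
        have := (mul_eq_zero.mp b2).resolve_left hβ.ne'
        exact sub_eq_zero.mp (eq_zero_of_pow_eq_zero this)
      have c1 : x = xb := by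
        have h := (mul_eq_zero.mp b1).resolve_left hθ.ne'
        have h' : ‖x - xb‖ ^ (2 * γ + 2) = 0 := by linarith
        exact sub_eq_zero.mp (norm_eq_zero.mp (eq_zero_of_pow_eq_zero h'))
      rw [c1, c2]
    rw [← hqeq]
    exact hlim2
  refine ⟨hconv, ?_⟩
  have hw' : Tendsto p atTop (nhdsWithin (tb, xb, xb) D) :=
    tendsto_nhdsWithin_iff.mpr ⟨hconv, Eventually.of_forall fun n => hpD _⟩
  have ht : Tendsto (fun n => F (p n)) atTop (nhds (F (tb, xb, xb))) :=
    (hFc _ hbD).tendsto.comp hw'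
  rw [hFb] at ht
  exact tendsto_of_tendsto_of_tendsto_of_le_of_le tendsto_const_nhds ht hlow hup
end

section
/- Let σ : [0,T] × ℝ^d → ℝ^{d×d} satisfy ‖σ(t,x) − σ(t,y)‖_F ≤ L‖x−y‖ and ‖σ(t,x)‖_F ≤ b for all t ∈ [0,T] and x, y ∈ ℝ^d. Let X and Y be d×d real symmetric matrices and α, β ≥ 0 such that α[[I_d, −I_d], [−I_d, I_d]] + β I_{2d} − [[X, 0], [0, −Y]] is positive semidefinite. Then for all t ∈ [0,T] and x, y ∈ ℝ^d: (1/2)(Tr(σ(t,x)ᵀ X σ(t,x)) − Tr(σ(t,y)ᵀ Y σ(t,y))) ≤ (α L²/2)‖x − y‖² + β b². -/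
open Matrix Set

theorem sqrt_sq_aux {a c : ℝ} (h : Real.sqrt a ≤ c) : a ≤ c ^ 2 :=
  (Real.sqrt_le_left ((Real.sqrt_nonneg _).trans h)).1 h

theorem frob_trace_aux {d : ℕ} (A : Matrix (Fin d) (Fin d) ℝ) :
    (Aᵀ * A).trace = ∑ i, ∑ j, (A i j) ^ 2 := by
  rw [Finset.sum_comm]
  simp [Matrix.trace, Matrix.mul_apply, sq]

/-- The estimate on `½ Tr[σ*Xσ − σ*Yσ]` used in the proof of the viscosity comparison theorem
(Theorem 5.1), for a Lipschitz and bounded diffusion coefficient `σ` (Frobenius norm) and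
matrices `X`, `Y` satisfying the Crandall–Ishii block inequality. -/
theorem stmt_12 {d : ℕ} (T : ℝ) (hT : 0 < T) (L b : ℝ)
    (σm : ℝ → EuclideanSpace ℝ (Fin d) → Matrix (Fin d) (Fin d) ℝ)
    (hσL : ∀ t ∈ Icc (0 : ℝ) T, ∀ x y : EuclideanSpace ℝ (Fin d),
      Real.sqrt (∑ i, ∑ j, (σm t x i j - σm t y i j) ^ 2) ≤ L * ‖x - y‖)
    (hσb : ∀ t ∈ Icc (0 : ℝ) T, ∀ x : EuclideanSpace ℝ (Fin d),
      Real.sqrt (∑ i, ∑ j, (σm t x i j) ^ 2) ≤ b)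
    (X Y : Matrix (Fin d) (Fin d) ℝ) (hX : X.IsSymm) (hY : Y.IsSymm)
    (α β : ℝ) (hα : 0 ≤ α) (hβ : 0 ≤ β)
    (h : (α • Matrix.fromBlocks (1 : Matrix (Fin d) (Fin d) ℝ) (-1) (-1) 1 +
        β • (1 : Matrix (Fin d ⊕ Fin d) (Fin d ⊕ Fin d) ℝ) -
        Matrix.fromBlocks X 0 0 (-Y)).PosSemidef) :
    ∀ t ∈ Icc (0 : ℝ) T, ∀ x y : EuclideanSpace ℝ (Fin d),
      (1 / 2) * (((σm t x)ᵀ * X * σm t x).trace - ((σm t y)ᵀ * Y * σm t y).trace) ≤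
        α * L ^ 2 / 2 * ‖x - y‖ ^ 2 + β * b ^ 2 := by
  intro t ht x y
  have key := (h.conjTranspose_mul_mul_same
    (Matrix.fromRows (σm t x) (σm t y))).trace_nonneg
  have hL := sqrt_sq_aux (hσL t ht x y)
  have hbx := sqrt_sq_aux (hσb t ht x)
  have hby := sqrt_sq_aux (hσb t ht y)
  have e1 := frob_trace_aux (σm t x - σm t y)
  have e2 := frob_trace_aux (σm t x)
  have e3 := frob_trace_aux (σm t y)
  simp only [Matrix.sub_apply] at e1
  rw [← e1] at hL
  rw [← e2] at hbx
  rw [← e3] at hby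
  have e : (Matrix.fromRows (σm t x) (σm t y))ᴴ *
      (α • Matrix.fromBlocks (1 : Matrix (Fin d) (Fin d) ℝ) (-1) (-1) 1 +
        β • (1 : Matrix (Fin d ⊕ Fin d) (Fin d ⊕ Fin d) ℝ) -
        Matrix.fromBlocks X 0 0 (-Y)) * Matrix.fromRows (σm t x) (σm t y) =
      α • ((σm t x - σm t y)ᵀ * (σm t x - σm t y)) +
      β • ((σm t x)ᵀ * σm t x + (σm t y)ᵀ * σm t y) -
      ((σm t x)ᵀ * X * σm t x - (σm t y)ᵀ * Y * σm t y) := by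
    rw [Matrix.conjTranspose_eq_transpose_of_trivial, Matrix.transpose_fromRows]
    simp only [Matrix.mul_sub, Matrix.sub_mul, Matrix.mul_add, Matrix.add_mul, Matrix.mul_smul,
      Matrix.smul_mul, Matrix.mul_one, Matrix.fromCols_mul_fromBlocks,
      Matrix.fromCols_mul_fromRows, Matrix.mul_neg, Matrix.neg_mul, Matrix.mul_zero,
      Matrix.transpose_sub, zero_add, add_zero, smul_add, smul_sub, smul_neg]
    abel
  rw [e] at key
  simp only [Matrix.trace_sub, Matrix.trace_add, Matrix.trace_smul, smul_eq_mul] at key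
  rw [mul_pow] at hL
  have k1 := mul_le_mul_of_nonneg_left hL hα
  have k2 := mul_le_mul_of_nonneg_left hbx hβ
  have k3 := mul_le_mul_of_nonneg_left hby hβ
  linarith
end

section
/- Assume the setting below. If ū is a viscosity subsolution of (★) and v̄ is a viscosity supersolution of (★), and both ū and v̄ are continuous on [0,T] × ℝ^d with polynomial growth (i.e. |ū(t,x)| + |v̄(t,x)| ≤ C(1+‖x‖^γ) for some constants C, γ), then ū(t,x) ≤ v̄(t,x) for all (t,x) ∈ [0,T] × ℝ^d. -/
open Set Matrix
open scoped InnerProductSpace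

noncomputable section

/-- Time derivative `∂_t φ(t,x)`. -/
def timeDeriv {d : ℕ} (φ : ℝ × EuclideanSpace ℝ (Fin d) → ℝ) (t : ℝ)
    (x : EuclideanSpace ℝ (Fin d)) : ℝ :=
  deriv (fun s => φ (s, x)) t

/-- Spatial gradient `∇_x φ(t,x)`. -/
def spaceGrad {d : ℕ} (φ : ℝ × EuclideanSpace ℝ (Fin d) → ℝ) (t : ℝ)
    (x : EuclideanSpace ℝ (Fin d)) : EuclideanSpace ℝ (Fin d) :=
  gradient (fun y => φ (t, y)) x

/-- Spatial Hessian matrix `D²_x φ(t,x)`. -/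
def spaceHess {d : ℕ} (φ : ℝ × EuclideanSpace ℝ (Fin d) → ℝ) (t : ℝ)
    (x : EuclideanSpace ℝ (Fin d)) : Matrix (Fin d) (Fin d) ℝ :=
  fun i j => fderiv ℝ (fun y => fderiv ℝ (fun z => φ (t, z)) y (EuclideanSpace.single j 1)) x
    (EuclideanSpace.single i 1)

/-- The second order operator `ℒφ(t,x) = ½ Tr[σσᵀ(t,x) D²_x φ(t,x)]`. -/
def genL {d : ℕ} (σm : ℝ → EuclideanSpace ℝ (Fin d) → Matrix (Fin d) (Fin d) ℝ)
    (φ : ℝ × EuclideanSpace ℝ (Fin d) → ℝ) (t : ℝ) (x : EuclideanSpace ℝ (Fin d)) : ℝ :=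
  (1 / 2) * (σm t x * (σm t x)ᵀ * spaceHess φ t x).trace

/-- A matrix acting on a Euclidean vector. -/
def mvec {d : ℕ} (M : Matrix (Fin d) (Fin d) ℝ) (v : EuclideanSpace ℝ (Fin d)) :
    EuclideanSpace ℝ (Fin d) :=
  Matrix.toEuclideanLin M v

/-- The Hamiltonian `H(t,x,z,u,v) = z·σ(t,x)⁻¹ f(t,x,u,v) + Γ(t,x,u,v)`. -/
def Hfun {d : ℕ} {A B : Type*}
    (σm : ℝ → EuclideanSpace ℝ (Fin d) → Matrix (Fin d) (Fin d) ℝ)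
    (f : ℝ → EuclideanSpace ℝ (Fin d) → A → B → EuclideanSpace ℝ (Fin d))
    (Γ : ℝ → EuclideanSpace ℝ (Fin d) → A → B → ℝ)
    (t : ℝ) (x z : EuclideanSpace ℝ (Fin d)) (u : A) (v : B) : ℝ :=
  ⟪z, mvec (σm t x)⁻¹ (f t x u v)⟫_ℝ + Γ t x u v

/-- The (lower) value `H*(t,x,z) = inf_u sup_v H(t,x,z,u,v)` of the Hamiltonian. -/
def Hstar {d : ℕ} {A B : Type*}
    (σm : ℝ → EuclideanSpace ℝ (Fin d) → Matrix (Fin d) (Fin d) ℝ)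
    (f : ℝ → EuclideanSpace ℝ (Fin d) → A → B → EuclideanSpace ℝ (Fin d))
    (Γ : ℝ → EuclideanSpace ℝ (Fin d) → A → B → ℝ)
    (t : ℝ) (x z : EuclideanSpace ℝ (Fin d)) : ℝ :=
  ⨅ u : A, ⨆ v : B, Hfun σm f Γ t x z u v

/-- Viscosity subsolution of the transformed double-obstacle equation (★). -/
def IsSubsolStar {d : ℕ} {A B : Type*} (T : ℝ)
    (σm : ℝ → EuclideanSpace ℝ (Fin d) → Matrix (Fin d) (Fin d) ℝ)
    (f : ℝ → EuclideanSpace ℝ (Fin d) → A → B → EuclideanSpace ℝ (Fin d))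
    (Γ : ℝ → EuclideanSpace ℝ (Fin d) → A → B → ℝ)
    (h h' : ℝ → EuclideanSpace ℝ (Fin d) → ℝ) (g : EuclideanSpace ℝ (Fin d) → ℝ)
    (vb : ℝ × EuclideanSpace ℝ (Fin d) → ℝ) : Prop :=
  (∀ x, vb (T, x) ≤ Real.exp T * g x) ∧
  ∀ φ : ℝ × EuclideanSpace ℝ (Fin d) → ℝ, ContDiff ℝ 2 φ →
    ∀ t ∈ Icc (0 : ℝ) T, ∀ x : EuclideanSpace ℝ (Fin d),
      IsLocalMaxOn (fun p => vb p - φ p)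
        (Icc (0 : ℝ) T ×ˢ (univ : Set (EuclideanSpace ℝ (Fin d)))) (t, x) →
      min (vb (t, x) - Real.exp t * h t x)
        (max (-(timeDeriv φ t x) + vb (t, x) - genL σm φ t x -
            Real.exp t * Hstar σm f Γ t x (Real.exp (-t) • mvec (σm t x)ᵀ (spaceGrad φ t x)))
          (vb (t, x) - Real.exp t * h' t x)) ≤ 0

/-- Viscosity supersolution of the transformed double-obstacle equation (★). -/
def IsSupersolStar {d : ℕ} {A B : Type*} (T : ℝ)
    (σm : ℝ → EuclideanSpace ℝ (Fin d) → Matrix (Fin d) (Fin d) ℝ)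
    (f : ℝ → EuclideanSpace ℝ (Fin d) → A → B → EuclideanSpace ℝ (Fin d))
    (Γ : ℝ → EuclideanSpace ℝ (Fin d) → A → B → ℝ)
    (h h' : ℝ → EuclideanSpace ℝ (Fin d) → ℝ) (g : EuclideanSpace ℝ (Fin d) → ℝ)
    (vb : ℝ × EuclideanSpace ℝ (Fin d) → ℝ) : Prop :=
  (∀ x, Real.exp T * g x ≤ vb (T, x)) ∧
  ∀ φ : ℝ × EuclideanSpace ℝ (Fin d) → ℝ, ContDiff ℝ 2 φ →
    ∀ t ∈ Icc (0 : ℝ) T, ∀ x : EuclideanSpace ℝ (Fin d),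
      IsLocalMinOn (fun p => vb p - φ p)
        (Icc (0 : ℝ) T ×ˢ (univ : Set (EuclideanSpace ℝ (Fin d)))) (t, x) →
      0 ≤ min (vb (t, x) - Real.exp t * h t x)
        (max (-(timeDeriv φ t x) + vb (t, x) - genL σm φ t x -
            Real.exp t * Hstar σm f Γ t x (Real.exp (-t) • mvec (σm t x)ᵀ (spaceGrad φ t x)))
          (vb (t, x) - Real.exp t * h' t x))


section sums
variable {E : Type*} [NormedAddCommGroup E] [InnerProductSpace ℝ E]

theorem aux_quad (k l : ℝ) (hk : 0 < k) (hl : 0 < l) (a b : E) :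
    k * l / (k + l) * ‖a + b‖ ^ 2 ≤ l * ‖a‖ ^ 2 + k * ‖b‖ ^ 2 := by
  have h1 : 0 ≤ ‖l • a - k • b‖ ^ 2 := by positivity
  rw [norm_sub_sq_real, norm_smul, norm_smul, real_inner_smul_left, real_inner_smul_right,
    Real.norm_of_nonneg hk.le, Real.norm_of_nonneg hl.le] at h1
  rw [norm_add_sq_real]
  have hs : 0 < k + l := by positivity
  rw [div_mul_eq_mul_div, div_le_iff₀ hs]
  nlinarith

theorem aux_quad_eq (k l : ℝ) (hk : 0 < k) (hl : 0 < l) (y z : E) :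
    ∃ x : E, l * ‖x - y‖ ^ 2 + k * ‖x - z‖ ^ 2 = k * l / (k + l) * ‖y - z‖ ^ 2 := by
  have hs : 0 < k + l := by positivity
  refine ⟨y + (k / (k + l)) • (z - y), ?_⟩
  have e1 : y + (k / (k + l)) • (z - y) - y = (k / (k + l)) • (z - y) := by abel
  have e2 : y + (k / (k + l)) • (z - y) - z = (-(l / (k + l))) • (z - y) := by
    have : l / (k + l) = 1 - k / (k + l) := by field_simp; ring
    rw [this, neg_smul, sub_smul, one_smul]; abel
  rw [e1, e2, norm_smul, norm_smul, mul_pow, mul_pow, Real.norm_eq_abs, Real.norm_eq_abs, sq_abs,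
    sq_abs, norm_sub_rev z y]
  field_simp

theorem lasry_lions [FiniteDimensional ℝ E] (K : Set E) (hK : IsCompact K) (hne : K.Nonempty)
    (U : E → ℝ) (hU : ContinuousOn U K) (k l : ℝ) (hk : 0 < k) (hl : 0 < l) :
    ∃ (A : E → ℝ) (G : E → E) (C : ℝ), 0 < C ∧
      (∀ x, ∀ z ∈ K, U z ≤ A x + k * ‖x - z‖ ^ 2) ∧
      (∀ e y, (∀ x, ∀ z ∈ K, U z - k * ‖x - z‖ ^ 2 ≤ e + l * ‖x - y‖ ^ 2) →
        ∀ x, A x ≤ e + l * ‖x - y‖ ^ 2) ∧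
      (∀ x ξ, |A (x + ξ) - A x - ⟪G x, ξ⟫_ℝ| ≤ C * ‖ξ‖ ^ 2) := by
  set m := k * l / (k + l) with hm
  have hs : 0 < k + l := by positivity
  have hm0 : 0 < m := by positivity
  have hml : m < l := by
    rw [hm, div_lt_iff₀ hs]; nlinarith
  -- the function c
  obtain ⟨c, hcc, hcub, hcat⟩ : ∃ c : E → ℝ, Continuous c ∧
      (∀ y, ∀ z ∈ K, U z - m * ‖y - z‖ ^ 2 ≤ c y) ∧
      (∀ y, ∃ z ∈ K, c y = U z - m * ‖y - z‖ ^ 2) := by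
    have : CompactSpace K := isCompact_iff_compactSpace.mp hK
    have hf : Continuous ↿(fun (y : E) (z : K) => U z - m * ‖y - z‖ ^ 2) := by
      have h1 : Continuous (fun z : K => U z) := continuousOn_iff_continuous_domRestrict.mp hU
      have : Continuous (fun p : E × K => U p.2 - m * ‖p.1 - p.2‖ ^ 2) := by
        have h2 : Continuous (fun p : E × K => U p.2) := h1.comp continuous_snd
        exact h2.sub (by fun_prop)
      exact this
    have hf' : ∀ y : E, Continuous (fun z : K => U z - m * ‖y - z‖ ^ 2) := fun y =>
      hf.comp (by fun_prop : Continuous (fun z : K => (y, z)))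
    have : Nonempty K := hne.to_subtype
    have hmax : ∀ y : E, ∃ z : K, ∀ z' : K, U z' - m * ‖y - (z' : E)‖ ^ 2 ≤ U z - m * ‖y - z‖ ^ 2 := by
      intro y
      obtain ⟨z, _, hz⟩ := isCompact_univ.exists_isMaxOn (univ_nonempty (α := K))
        (hf' y).continuousOn
      exact ⟨z, fun z' => hz (mem_univ z')⟩
    have hcs := isCompact_univ.continuous_sSup hf
    have heq : ∀ y : E, ∀ z : K, (∀ z' : K, U z' - m * ‖y - (z' : E)‖ ^ 2 ≤ U z - m * ‖y - z‖ ^ 2) →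
        sSup ((fun (z : K) => U z - m * ‖y - z‖ ^ 2) '' univ) = U z - m * ‖y - z‖ ^ 2 := by
      intro y z hz
      apply IsGreatest.csSup_eq
      refine ⟨⟨z, mem_univ _, rfl⟩, ?_⟩
      rintro _ ⟨z', _, rfl⟩
      exact hz z'
    refine ⟨_, hcs, ?_, ?_⟩
    · intro y z hz
      obtain ⟨z0, h0⟩ := hmax y
      rw [heq y z0 h0]
      exact h0 ⟨z, hz⟩
    · intro y
      obtain ⟨z0, h0⟩ := hmax y
      exact ⟨z0, z0.2, heq y z0 h0⟩
  -- minimizers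
  have hmin : ∀ x : E, ∃ y, ∀ y', c y + l * ‖x - y‖ ^ 2 ≤ c y' + l * ‖x - y'‖ ^ 2 := by
    intro x
    obtain ⟨z0, hz0⟩ := hne
    have hcont : Continuous fun y => c y + l * ‖x - y‖ ^ 2 := by fun_prop
    refine hcont.exists_forall_le ?_
    set B := 2 * l * ‖x‖ + 2 * m * ‖z0‖ with hB
    have hlow : ∀ y, (U z0 - m * ‖z0‖ ^ 2) + ‖y‖ * ((l - m) * ‖y‖ - B) ≤
        c y + l * ‖x - y‖ ^ 2 := by
      intro y
      have h1 := hcub y z0 hz0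
      have h2 : ‖y - z0‖ ^ 2 ≤ (‖y‖ + ‖z0‖) ^ 2 := by
        gcongr; exact norm_sub_le _ _
      have h3 : ‖y‖ ^ 2 - 2 * ‖x‖ * ‖y‖ ≤ ‖x - y‖ ^ 2 := by
        rw [norm_sub_sq_real]
        have := real_inner_le_norm x y
        nlinarith [sq_nonneg ‖x‖]
      have h4 := mul_le_mul_of_nonneg_left h2 hm0.le
      have h5 := mul_le_mul_of_nonneg_left h3 hl.le
      rw [hB]
      nlinarith
    refine Filter.tendsto_atTop_mono hlow ?_
    apply Filter.tendsto_atTop_add_const_left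
    have hn := tendsto_norm_cocompact_atTop (E := E)
    refine hn.atTop_mul_atTop₀ ?_
    exact Filter.tendsto_atTop_add_const_right _ (-B) (hn.const_mul_atTop (by linarith))
  choose Y hY using hmin
  set A : E → ℝ := fun x => c (Y x) + l * ‖x - Y x‖ ^ 2 with hA
  have hAle : ∀ x y, A x ≤ c y + l * ‖x - y‖ ^ 2 := fun x y => hY x y
  have hup : ∀ x ξ, A (x + ξ) ≤ A x + ⟪(2 * l) • (x - Y x), ξ⟫_ℝ + l * ‖ξ‖ ^ 2 := by
    intro x ξ
    have := hAle (x + ξ) (Y x)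
    have e : x + ξ - Y x = (x - Y x) + ξ := by abel
    rw [e, norm_add_sq_real] at this
    rw [real_inner_smul_left]
    simp only [hA] at this ⊢
    linarith
  have hmid : ∀ x ξ, 2 * A x ≤ A (x + ξ) + A (x - ξ) + 2 * k * ‖ξ‖ ^ 2 := by
    intro x ξ
    set y1 := Y (x + ξ)
    set y2 := Y (x - ξ)
    set y := (1 / 2 : ℝ) • (y1 + y2) with hy
    set ζ := (1 / 2 : ℝ) • (y1 - y2) with hζ
    have ey1 : y1 = y + ζ := by rw [hy, hζ]; module
    have ey2 : y2 = y - ζ := by rw [hy, hζ]; module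
    obtain ⟨z, hz, hcz⟩ := hcat y
    have h1 := hcub y1 z hz
    have h2 := hcub y2 z hz
    have h3 := hAle x y
    have h4 := aux_quad k l hk hl (ζ - ξ) ξ
    rw [← hm, sub_add_cancel] at h4
    have n1 : ‖y1 - z‖ ^ 2 + ‖y2 - z‖ ^ 2 = 2 * ‖y - z‖ ^ 2 + 2 * ‖ζ‖ ^ 2 := by
      have := parallelogram_law_with_norm ℝ (y - z) ζ
      rw [ey1, ey2, show y + ζ - z = y - z + ζ by abel, show y - ζ - z = y - z - ζ by abel]
      nlinarith
    have n2 : ‖x + ξ - y1‖ ^ 2 + ‖x - ξ - y2‖ ^ 2 = 2 * ‖x - y‖ ^ 2 + 2 * ‖ζ - ξ‖ ^ 2 := by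
      have := parallelogram_law_with_norm ℝ (x - y) (ζ - ξ)
      rw [ey1, ey2, show x + ξ - (y + ζ) = x - y - (ζ - ξ) by abel,
        show x - ξ - (y - ζ) = x - y + (ζ - ξ) by abel]
      nlinarith
    have a1 : A (x + ξ) = c y1 + l * ‖x + ξ - y1‖ ^ 2 := rfl
    have a2 : A (x - ξ) = c y2 + l * ‖x - ξ - y2‖ ^ 2 := rfl
    nlinarith
  refine ⟨A, fun x => (2 * l) • (x - Y x), l + 2 * k, by positivity, ?_, ?_, ?_⟩
  · intro x z hz
    have h1 := hcub (Y x) z hz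
    have h2 := aux_quad k l hk hl (Y x - x) (x - z)
    rw [← hm, sub_add_sub_cancel, norm_sub_rev (Y x) x] at h2
    simp only [hA]; linarith
  · intro e y h x
    obtain ⟨z, hz, hcz⟩ := hcat y
    obtain ⟨x', hx'⟩ := aux_quad_eq k l hk hl y z
    have := h x' z hz
    have h3 := hAle x y
    rw [← hm] at hx'
    linarith
  · intro x ξ
    have h1 := hup x ξ
    have h2 := hup x (-ξ)
    have h3 := hmid x ξ
    rw [inner_neg_right, norm_neg, ← sub_eq_add_neg] at h2
    rw [abs_le]
    have : 0 ≤ k * ‖ξ‖ ^ 2 := by positivity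
    constructor <;> nlinarith

/-- Lipschitz bound for gradients touching with two-sided / one-sided quadratic bounds. -/
theorem grad_lip (C : ℝ) (P Q : E) (hC : 0 ≤ C) (x y : E)
    (h : ∀ z, ⟪P - Q, z - y⟫_ℝ ≤ C * (‖z - x‖ ^ 2 + ‖z - y‖ ^ 2 + ‖x - y‖ ^ 2)) :
    ‖P - Q‖ ≤ 6 * C * ‖x - y‖ := by
  by_cases hD : P - Q = 0
  · rw [hD, norm_zero]; positivity
  have hD' : 0 < ‖P - Q‖ := norm_pos_iff.mpr hD
  by_cases hxy : ‖x - y‖ = 0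
  · -- x = y
    have hxy' : x = y := by rwa [norm_eq_zero, sub_eq_zero] at hxy
    subst hxy'
    simp only [sub_self, norm_zero, mul_zero]
    by_contra hcon
    have key : ∀ t > 0, ‖P - Q‖ ^ 2 ≤ 2 * C * ‖P - Q‖ ^ 2 * t := by
      intro t ht
      have := h (x + t • (P - Q))
      rw [add_sub_cancel_left, real_inner_smul_right, real_inner_self_eq_norm_sq, norm_smul,
        Real.norm_of_nonneg ht.le, sub_self, norm_zero] at this
      have h2 : t * (‖P - Q‖ ^ 2) ≤ t * (2 * C * ‖P - Q‖ ^ 2 * t) := by nlinarith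
      exact le_of_mul_le_mul_left h2 ht
    have h1 := key (1 / (4 * (C + 1))) (by positivity)
    have : 2 * C * ‖P - Q‖ ^ 2 * (1 / (4 * (C + 1))) < ‖P - Q‖ ^ 2 := by
      rw [mul_one_div, div_lt_iff₀ (by positivity)]
      nlinarith [mul_pos hD' hD', mul_nonneg hC (sq_nonneg ‖P - Q‖)]
    linarith
  · set r := ‖x - y‖
    have hr0 : 0 < r := lt_of_le_of_ne (norm_nonneg _) (Ne.symm hxy)
    have h1 := h (y + (r / ‖P - Q‖) • (P - Q))
    have hn : ‖(r / ‖P - Q‖) • (P - Q)‖ = r := by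
      rw [norm_smul, Real.norm_of_nonneg (by positivity)]; field_simp
    have hn2 : ‖y + (r / ‖P - Q‖) • (P - Q) - x‖ ≤ 2 * r := by
      rw [show y + (r / ‖P - Q‖) • (P - Q) - x = (r / ‖P - Q‖) • (P - Q) - (x - y) by abel]
      refine (norm_sub_le _ _).trans ?_
      rw [hn]; simp only [r]; linarith
    have hn3 : ‖y + (r / ‖P - Q‖) • (P - Q) - x‖ ^ 2 ≤ (2 * r) ^ 2 := by gcongr
    rw [add_sub_cancel_left, hn, real_inner_smul_right, real_inner_self_eq_norm_sq] at h1
    have h2 : r / ‖P - Q‖ * ‖P - Q‖ ^ 2 = r * ‖P - Q‖ := by field_simp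
    rw [h2] at h1
    have h3 : r * ‖P - Q‖ ≤ r * (6 * C * r) := by nlinarith
    exact le_of_mul_le_mul_left h3 hr0

theorem taylor2 (A : E → ℝ) (G : E → E) (C : ℝ)
    (h : ∀ x ξ, |A (x + ξ) - A x - ⟪G x, ξ⟫_ℝ| ≤ C * ‖ξ‖ ^ 2) (x : E) (X : E →L[ℝ] E)
    (hX : HasFDerivAt G X x) (ε : ℝ) (hε : 0 < ε) :
    ∀ᶠ ξ in nhds (0 : E),
      |A (x + ξ) - A x - ⟪G x, ξ⟫_ℝ - 1 / 2 * ⟪X ξ, ξ⟫_ℝ| ≤ ε * ‖ξ‖ ^ 2 := by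
  have hd : ∀ (y ξ : E) (r : ℝ), HasDerivAt (fun r : ℝ => A (y + r • ξ)) ⟪G (y + r • ξ), ξ⟫_ℝ r := by
    intro y ξ r
    rw [hasDerivAt_iff_isLittleO_nhds_zero]
    have : (fun s : ℝ => A (y + (r + s) • ξ) - A (y + r • ξ) - s • ⟪G (y + r • ξ), ξ⟫_ℝ) =O[nhds 0]
        fun s : ℝ => s ^ 2 := by
      refine Asymptotics.IsBigO.of_bound (C * ‖ξ‖ ^ 2) (Filter.Eventually.of_forall fun s => ?_)
      have := h (y + r • ξ) (s • ξ)
      rw [real_inner_smul_right, norm_smul] at this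
      rw [add_smul, ← add_assoc, Real.norm_eq_abs, smul_eq_mul, Real.norm_eq_abs, abs_pow,
        ← Real.norm_eq_abs s]
      linarith
    refine this.trans_isLittleO ?_
    have := Asymptotics.isLittleO_pow_id (𝕜 := ℝ) (n := 2) (by norm_num)
    simpa using this
  rw [hasFDerivAt_iff_isLittleO_nhds_zero] at hX
  have h2 := hX.def hε
  rw [Metric.eventually_nhds_iff_ball] at h2
  obtain ⟨ρ, hρ, h2⟩ := h2
  filter_upwards [Metric.ball_mem_nhds (0 : E) hρ] with ξ hξ
  have key := norm_image_sub_le_of_norm_deriv_le_segment_01' (E := ℝ)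
    (f := fun r : ℝ => A (x + r • ξ) - r * ⟪G x, ξ⟫_ℝ - r ^ 2 / 2 * ⟪X ξ, ξ⟫_ℝ)
    (f' := fun r : ℝ => ⟪G (x + r • ξ), ξ⟫_ℝ - ⟪G x, ξ⟫_ℝ - r * ⟪X ξ, ξ⟫_ℝ)
    (C := ε * ‖ξ‖ ^ 2) ?_ ?_
  · simp only [one_smul, zero_smul, add_zero, Real.norm_eq_abs] at key
    convert key using 2
    ring
  · intro r _
    have d1 := hd x ξ r
    have d2 : HasDerivAt (fun r : ℝ => r * ⟪G x, ξ⟫_ℝ) ⟪G x, ξ⟫_ℝ r := by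
      simpa using (hasDerivAt_id r).mul_const ⟪G x, ξ⟫_ℝ
    have d3 : HasDerivAt (fun r : ℝ => r ^ 2 / 2 * ⟪X ξ, ξ⟫_ℝ) (r * ⟪X ξ, ξ⟫_ℝ) r := by
      have := ((hasDerivAt_pow 2 r).div_const 2).mul_const ⟪X ξ, ξ⟫_ℝ
      refine this.congr_deriv ?_
      norm_num
    exact ((d1.sub d2).sub d3).hasDerivWithinAt
  · intro r hr
    have hr1 : ‖r • ξ‖ ≤ ‖ξ‖ := by
      rw [norm_smul, Real.norm_of_nonneg hr.1]
      exact mul_le_of_le_one_left (norm_nonneg _) hr.2.le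
    have hmem : r • ξ ∈ Metric.ball (0 : E) ρ := by
      rw [mem_ball_zero_iff] at hξ ⊢
      exact lt_of_le_of_lt hr1 hξ
    have := h2 _ hmem
    have e : ⟪G (x + r • ξ), ξ⟫_ℝ - ⟪G x, ξ⟫_ℝ - r * ⟪X ξ, ξ⟫_ℝ =
        ⟪G (x + r • ξ) - G x - X (r • ξ), ξ⟫_ℝ := by
      rw [inner_sub_left, inner_sub_left, map_smul, real_inner_smul_left]
    rw [e]
    refine (norm_inner_le_norm _ _).trans ?_
    rw [sq, ← mul_assoc]
    gcongr
    exact this.trans (by gcongr)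

end sums

section sums2
variable {E : Type*} [NormedAddCommGroup E] [InnerProductSpace ℝ E]

theorem inner_zero_of_le (g : E) (C : ℝ) (h : ∀ ξ, ⟪g, ξ⟫_ℝ ≤ C * ‖ξ‖ ^ 2) : g = 0 := by
  have h1 : ‖g - 0‖ ≤ 6 * |C| * ‖(0 : E) - 0‖ := by
    refine grad_lip |C| g 0 (abs_nonneg _) 0 0 ?_
    intro z
    have := h z
    have h2 : C * ‖z‖ ^ 2 ≤ |C| * ‖z‖ ^ 2 := by gcongr; exact le_abs_self C
    have h3 : 0 ≤ |C| * ‖z‖ ^ 2 := by positivity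
    simp only [sub_zero, norm_zero]
    nlinarith
  simpa using h1

/-- Completing the square. -/
theorem complete_square (k e : ℝ) (hk : 0 < k) (he : 0 < e) (w x0 p : E) :
    ∃ (y : E) (c : ℝ), ∀ x, k * ‖x - w‖ ^ 2 + e / 2 * ‖x - x0‖ ^ 2 + ⟪p, x - x0⟫_ℝ =
      c + (k + e / 2) * ‖x - y‖ ^ 2 := by
  have hl : 0 < k + e / 2 := by positivity
  set y := (1 / (k + e / 2)) • (k • w + (e / 2) • x0 - (1 / 2 : ℝ) • p) with hy
  refine ⟨y, k * ‖w‖ ^ 2 + e / 2 * ‖x0‖ ^ 2 - ⟪p, x0⟫_ℝ - (k + e / 2) * ‖y‖ ^ 2, ?_⟩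
  intro x
  have hxy : (k + e / 2) * ⟪x, y⟫_ℝ = k * ⟪x, w⟫_ℝ + e / 2 * ⟪x, x0⟫_ℝ - 1 / 2 * ⟪p, x⟫_ℝ := by
    rw [hy, real_inner_smul_right, inner_sub_right, inner_add_right, real_inner_smul_right,
      real_inner_smul_right, real_inner_smul_right, real_inner_comm p x]
    field_simp
  rw [norm_sub_sq_real, norm_sub_sq_real, norm_sub_sq_real, inner_sub_right]
  linear_combination 2 * hxy

set_option maxHeartbeats 1600000 in
theorem sums_thm [FiniteDimensional ℝ E] (K : Set E) (hK : IsCompact K) (hne : K.Nonempty)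
    (U V : E → ℝ) (hU : ContinuousOn U K) (hV : ContinuousOn V K) (τ δ : ℝ) (hτ : 0 < τ)
    (hδ : 0 < δ) :
    ∃ z ∈ K, ∃ w ∈ K, ∃ q q' : E, ∃ X : E →L[ℝ] E,
      (∀ z' ∈ K, ∀ w' ∈ K, U z' - V w' - ‖z' - w'‖ ^ 2 / (2 * τ) ≤
        U z - V w - ‖z - w‖ ^ 2 / (2 * τ) + δ) ∧
      ‖q - q'‖ ≤ δ ∧ ‖q - (1 / τ) • (z - w)‖ ≤ δ ∧
      (∀ᶠ ξ in nhds (0 : E), z + ξ ∈ K →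
        U (z + ξ) ≤ U z + ⟪q, ξ⟫_ℝ + 1 / 2 * ⟪X ξ, ξ⟫_ℝ + δ * ‖ξ‖ ^ 2) ∧
      (∀ L : E →L[ℝ] E, ∀ᶠ η in nhds (0 : E), w + η ∈ K →
        V w + ⟪q', η⟫_ℝ + 1 / 2 * ⟪X (L η), L η⟫_ℝ - ‖L η - η‖ ^ 2 / τ - δ * ‖L η‖ ^ 2
          ≤ V (w + η)) := by
  set k := 1 / τ with hk
  have hk0 : 0 < k := by positivity
  set r := δ / 3 with hr
  have hr0 : 0 < r := by positivity
  -- maximum over K × K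
  obtain ⟨⟨zh, wh⟩, ⟨hzh, hwh⟩, hmax⟩ := (hK.prod hK).exists_isMaxOn (hne.prod hne)
    (f := fun p : E × E => U p.1 - V p.2 - k / 2 * ‖p.1 - p.2‖ ^ 2) (by
      have h1 : ContinuousOn (fun p : E × E => U p.1) (K ×ˢ K) :=
        hU.comp continuousOn_fst (fun p hp => hp.1)
      have h2 : ContinuousOn (fun p : E × E => V p.2) (K ×ˢ K) :=
        hV.comp continuousOn_snd (fun p hp => hp.2)
      exact (h1.sub h2).sub (by fun_prop))
  set M := U zh - V wh - k / 2 * ‖zh - wh‖ ^ 2 with hM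
  have hMle : ∀ z ∈ K, ∀ w ∈ K, U z - V w - k / 2 * ‖z - w‖ ^ 2 ≤ M :=
    fun z hz w hw => hmax (mk_mem_prod hz hw)
  set xh := (1 / 2 : ℝ) • (zh + wh) with hxh
  have hpar : ∀ x z w : E, k / 2 * ‖z - w‖ ^ 2 ≤ k * ‖x - z‖ ^ 2 + k * ‖x - w‖ ^ 2 := by
    intro x z w
    have := aux_quad k k hk0 hk0 (z - x) (x - w)
    rw [sub_add_sub_cancel, norm_sub_rev z x] at this
    have e : k * k / (k + k) = k / 2 := by field_simp; norm_num
    rwa [e] at this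
  set Θ : E → E → E → E → ℝ := fun p x z w =>
    U z - V w - k * ‖x - z‖ ^ 2 - k * ‖x - w‖ ^ 2 - δ / 2 * ‖x - xh‖ ^ 2 - ⟪p, x - xh⟫_ℝ with hΘ
  have hΘle : ∀ p x, ∀ z ∈ K, ∀ w ∈ K,
      Θ p x z w ≤ (U z - V w - k / 2 * ‖z - w‖ ^ 2) + ‖x - xh‖ * (‖p‖ - δ / 2 * ‖x - xh‖) := by
    intro p x z hz w hw
    have h2 := hpar x z w
    have h3 : -⟪p, x - xh⟫_ℝ ≤ ‖p‖ * ‖x - xh‖ :=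
      (neg_le_abs _).trans (abs_real_inner_le_norm _ _)
    simp only [hΘ]
    nlinarith
  have hΘ0 : ∀ p, Θ p xh zh wh = M := by
    intro p
    have e1 : xh - zh = (-(1 / 2 : ℝ)) • (zh - wh) := by rw [hxh]; module
    have e2 : xh - wh = ((1 / 2 : ℝ)) • (zh - wh) := by rw [hxh]; module
    simp only [hΘ, hM, e1, e2, norm_smul, sub_self, inner_zero_right, norm_zero]
    norm_num
    ring
  -- existence of maximizers
  have hex : ∀ p : E, ‖p‖ ≤ r → ∃ x, ∃ z ∈ K, ∃ w ∈ K,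
      ∀ x', ∀ z' ∈ K, ∀ w' ∈ K, Θ p x' z' w' ≤ Θ p x z w := by
    intro p hp
    have hcpt := (isCompact_closedBall xh (2 * r / δ)).prod (hK.prod hK)
    obtain ⟨⟨x, z, w⟩, ⟨hx, hz, hw⟩, hm⟩ := hcpt.exists_isMaxOn
      ((Metric.nonempty_closedBall.mpr (by positivity)).prod (hne.prod hne))
      (f := fun t : E × E × E => Θ p t.1 t.2.1 t.2.2) (by
        have h1 : ContinuousOn (fun p : E × E × E => U p.2.1)
            (Metric.closedBall xh (2 * r / δ) ×ˢ K ×ˢ K) :=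
          hU.comp (by fun_prop) (fun p hp => hp.2.1)
        have h2 : ContinuousOn (fun p : E × E × E => V p.2.2)
            (Metric.closedBall xh (2 * r / δ) ×ˢ K ×ˢ K) :=
          hV.comp (by fun_prop) (fun p hp => hp.2.2)
        simp only [hΘ]
        exact ((((h1.sub h2).sub (by fun_prop)).sub (by fun_prop)).sub (by fun_prop)).sub
          (by fun_prop))
    refine ⟨x, z, hz, w, hw, ?_⟩
    intro x' z' hz' w' hw'
    by_cases hx' : x' ∈ Metric.closedBall xh (2 * r / δ)
    · exact hm (mk_mem_prod hx' (mk_mem_prod hz' hw'))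
    · have h0 : Θ p xh zh wh ≤ Θ p x z w :=
        hm (mk_mem_prod (Metric.mem_closedBall_self (by positivity)) (mk_mem_prod hzh hwh))
      rw [hΘ0] at h0
      have h1 := hΘle p x' z' hz' w' hw'
      have h2 := hMle z' hz' w' hw'
      rw [Metric.mem_closedBall, dist_eq_norm, not_le, div_lt_iff₀ hδ] at hx'
      have h3 : ‖x' - xh‖ * (‖p‖ - δ / 2 * ‖x' - xh‖) ≤ 0 :=
        mul_nonpos_of_nonneg_of_nonpos (norm_nonneg _) (by linarith)
      linarith
  -- stationarity
  have hstat : ∀ p x z w, z ∈ K → w ∈ K →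
      (∀ x', ∀ z' ∈ K, ∀ w' ∈ K, Θ p x' z' w' ≤ Θ p x z w) →
      (2 * k) • (z - x) - (2 * k) • (x - w) - δ • (x - xh) - p = 0 ∧
      ∀ x', Θ p x' z w = Θ p x z w - (2 * k + δ / 2) * ‖x' - x‖ ^ 2 := by
    intro p x z w hz hw hm
    have hexp : ∀ ξ, Θ p (x + ξ) z w = Θ p x z w +
        ⟪(2 * k) • (z - x) - (2 * k) • (x - w) - δ • (x - xh) - p, ξ⟫_ℝ
        - (2 * k + δ / 2) * ‖ξ‖ ^ 2 := by
      intro ξ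
      simp only [hΘ]
      rw [show x + ξ - z = (x - z) + ξ by abel, show x + ξ - w = (x - w) + ξ by abel,
        show x + ξ - xh = (x - xh) + ξ by abel, show z - x = -(x - z) by abel]
      simp only [norm_add_sq_real, inner_sub_left, inner_add_right, real_inner_smul_left,
        inner_neg_left, inner_sub_right]
      ring
    have h0 : (2 * k) • (z - x) - (2 * k) • (x - w) - δ • (x - xh) - p = 0 := by
      apply inner_zero_of_le _ (2 * k + δ / 2)
      intro ξ
      have := hm (x + ξ) z hz w hw
      rw [hexp] at this
      linarith
    refine ⟨h0, fun x' => ?_⟩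
    have := hexp (x' - x)
    rw [h0, inner_zero_left, add_sub_cancel] at this
    linarith
  set S : Set E := {x | ∃ p, ‖p‖ ≤ r ∧ ∃ z ∈ K, ∃ w ∈ K,
      ∀ x', ∀ z' ∈ K, ∀ w' ∈ K, Θ p x' z' w' ≤ Θ p x z w} with hS
  have hlip : ∀ x y p p' z w z' w', z ∈ K → w ∈ K → z' ∈ K → w' ∈ K →
      (∀ x', ∀ z' ∈ K, ∀ w' ∈ K, Θ p x' z' w' ≤ Θ p x z w) →
      (∀ x', ∀ z'' ∈ K, ∀ w'' ∈ K, Θ p' x' z'' w'' ≤ Θ p' y z' w') →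
      ‖p - p'‖ ≤ 6 * (2 * k + δ / 2) * ‖x - y‖ := by
    intro x y p p' z w z' w' hz hw hz' hw' hm hm'
    apply grad_lip _ _ _ (by positivity)
    intro x'
    have h1 := hm' x' z hz w hw
    have h2 := hm y z' hz' w' hw'
    have h3 := (hstat p x z w hz hw hm).2 x'
    have e1 : Θ p' x' z w = Θ p x' z w + ⟪p - p', x' - xh⟫_ℝ := by
      simp only [hΘ, inner_sub_left]; ring
    have e2 : Θ p' y z' w' = Θ p y z' w' + ⟪p - p', y - xh⟫_ℝ := by
      simp only [hΘ, inner_sub_left]; ring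
    have e3 : ⟪p - p', x' - y⟫_ℝ = ⟪p - p', x' - xh⟫_ℝ - ⟪p - p', y - xh⟫_ℝ := by
      rw [← inner_sub_right]; congr 1; abel
    have h4 : ⟪p - p', x' - y⟫_ℝ ≤ (2 * k + δ / 2) * ‖x' - x‖ ^ 2 := by linarith
    refine h4.trans ?_
    gcongr
    nlinarith [sq_nonneg ‖x' - y‖, sq_nonneg ‖x - y‖]
  obtain ⟨A, G, C, hC, hF1, hF2, hT⟩ := lasry_lions K hK hne U hU k (k + δ / 2) hk0 (by positivity)
  -- G is Lipschitz
  have hGlip : LipschitzWith (Real.toNNReal (6 * C)) G := by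
    apply LipschitzWith.of_dist_le_mul
    intro x y
    rw [dist_eq_norm, dist_eq_norm, Real.coe_toNNReal _ (by positivity)]
    apply grad_lip _ _ _ hC.le
    intro z
    have h1 := (abs_le.mp (hT x (z - x))).1
    have h2 := (abs_le.mp (hT y (z - y))).2
    have h3 := (abs_le.mp (hT x (y - x))).2
    rw [add_sub_cancel] at h1 h2 h3
    have e : ⟪G x - G y, z - y⟫_ℝ = ⟪G x, z - x⟫_ℝ - ⟪G x, y - x⟫_ℝ - ⟪G y, z - y⟫_ℝ := by
      rw [← inner_sub_right, sub_sub_sub_cancel_right, inner_sub_left]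
    rw [norm_sub_rev y x] at h3
    rw [e]
    linarith
  -- a good point
  obtain ⟨x, hxS, hxd⟩ : ∃ x ∈ S, DifferentiableAt ℝ G x := by
    by_contra hcon
    push Not at hcon
    let _ : MeasurableSpace E := borel E
    have : BorelSpace E := ⟨rfl⟩
    have had := hGlip.ae_differentiableAt (μ := MeasureTheory.Measure.hausdorffMeasure (X := E)
      (Module.finrank ℝ E))
    have hSnull : MeasureTheory.Measure.hausdorffMeasure (X := E) (Module.finrank ℝ E) S = 0 := by
      refine MeasureTheory.measure_mono_null ?_ (MeasureTheory.ae_iff.mp had)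
      intro x hx
      exact hcon x hx
    choose! P hP1 Z hZ W hW hPm using (fun x (hx : x ∈ S) => hx)
    have hPlip : LipschitzOnWith (Real.toNNReal (6 * (2 * k + δ / 2))) P S := by
      apply LipschitzOnWith.of_dist_le_mul
      intro x hx y hy
      rw [dist_eq_norm, dist_eq_norm, Real.coe_toNNReal _ (by positivity)]
      exact hlip x y _ _ _ _ _ _ (hZ x hx) (hW x hx) (hZ y hy) (hW y hy) (hPm x hx) (hPm y hy)
    have himg := hPlip.hausdorffMeasure_image_le (d := Module.finrank ℝ E) (by positivity)
    rw [hSnull, mul_zero] at himg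
    have hsub : Metric.ball (0 : E) r ⊆ P '' S := by
      intro p hp
      rw [mem_ball_zero_iff] at hp
      obtain ⟨x, z, hz, w, hw, hm⟩ := hex p hp.le
      have hx : x ∈ S := ⟨p, hp.le, z, hz, w, hw, hm⟩
      refine ⟨x, hx, ?_⟩
      have := hlip x x _ _ _ _ _ _ (hZ x hx) (hW x hx) hz hw (hPm x hx) hm
      rw [sub_self, norm_zero, mul_zero] at this
      exact sub_eq_zero.mp (norm_le_zero_iff.mp this)
    have h0 : MeasureTheory.Measure.hausdorffMeasure (X := E) (Module.finrank ℝ E)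
        (Metric.ball (0 : E) r) = 0 :=
      MeasureTheory.measure_mono_null hsub (le_antisymm himg zero_le)
    exact (Metric.measure_ball_pos _ (0 : E) hr0).ne' h0
  obtain ⟨p, hp, z, hz, w, hw, hm⟩ := hxS
  obtain ⟨X, hX⟩ := hxd
  have htay := taylor2 A G C hT x X hX (δ / 2) (by positivity)
  obtain ⟨hst, -⟩ := hstat p x z w hz hw hm
  set m := Θ p x z w with hmdef
  have hB : ∀ x', ∀ w' ∈ K,
      A x' ≤ m + V w' + (k * ‖x' - w'‖ ^ 2 + δ / 2 * ‖x' - xh‖ ^ 2 + ⟪p, x' - xh⟫_ℝ) := by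
    intro x' w' hw'
    obtain ⟨y, c, hyc⟩ := complete_square k δ hk0 hδ w' xh p
    have := hF2 (m + V w' + c) y ?_ x'
    · rw [hyc]; linarith
    · intro x'' z'' hz''
      have h1 := hm x'' z'' hz'' w' hw'
      have h2 := hyc x''
      simp only [hΘ] at h1
      linarith
  have hAeq : U z = A x + k * ‖x - z‖ ^ 2 := by
    apply le_antisymm (hF1 x z hz)
    have := hB x w hw
    simp only [hmdef, hΘ] at this
    linarith
  have hGx : G x = (2 * k) • (z - x) := by
    have : -(G x - (2 * k) • (z - x)) = 0 := by
      apply inner_zero_of_le _ (C + k)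
      intro ξ
      have h1 := hF1 (x + ξ) z hz
      have h2 := (abs_le.mp (hT x ξ)).2
      rw [show x + ξ - z = (x - z) + ξ by abel, norm_add_sq_real] at h1
      rw [inner_neg_left, inner_sub_left, real_inner_smul_left, show z - x = -(x - z) by abel,
        inner_neg_left]
      nlinarith
    rwa [neg_eq_zero, sub_eq_zero] at this
  have hmM : M ≤ m := by
    rw [← hΘ0 p]; exact hm xh zh hzh wh hwh
  have hmle := hΘle p x z hz w hw
  rw [← hmdef] at hmle
  have hMzw := hMle z hz w hw
  have hxx : δ * ‖x - xh‖ ≤ 2 * r := by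
    by_contra hcon
    push Not at hcon
    have : 0 < ‖x - xh‖ := by
      by_contra h0
      have : ‖x - xh‖ = 0 := le_antisymm (not_lt.mp h0) (norm_nonneg _)
      rw [this] at hcon; linarith
    have : ‖x - xh‖ * (‖p‖ - δ / 2 * ‖x - xh‖) < 0 :=
      mul_neg_of_pos_of_neg this (by linarith)
    linarith
  have hqq : (2 * k) • (z - x) - (2 * k) • (x - w) = δ • (x - xh) + p := by
    rw [← sub_eq_zero, ← hst]; abel
  have hqn : ‖(2 * k) • (z - x) - (2 * k) • (x - w)‖ ≤ δ := by
    rw [hqq]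
    refine (norm_add_le _ _).trans ?_
    rw [norm_smul, Real.norm_of_nonneg hδ.le]
    linarith
  refine ⟨z, hz, w, hw, G x, (2 * k) • (x - w), X, ?_, ?_, ?_, ?_, ?_⟩
  · intro z' hz' w' hw'
    have h1 := hMle z' hz' w' hw'
    have e : ∀ a : ℝ, a / (2 * τ) = k / 2 * a := by intro a; rw [hk]; field_simp
    rw [e, e]
    have h2 : ‖x - xh‖ * (‖p‖ - δ / 2 * ‖x - xh‖) ≤ δ := by
      have h3 : ‖x - xh‖ * (‖p‖ - δ / 2 * ‖x - xh‖) ≤ ‖x - xh‖ * r := by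
        gcongr
        nlinarith [norm_nonneg (x - xh)]
      have h5 : δ * (‖x - xh‖ * r) ≤ δ * δ := by
        have : δ * ‖x - xh‖ * r ≤ 2 * r * r := by gcongr
        nlinarith
      exact h3.trans (le_of_mul_le_mul_left h5 hδ)
    linarith
  · rw [hGx]; exact hqn
  · have e : G x - k • (z - w) = (1 / 2 : ℝ) • ((2 * k) • (z - x) - (2 * k) • (x - w)) := by
      rw [hGx]; module
    rw [e, norm_smul]
    norm_num
    linarith
  · filter_upwards [htay] with ξ hξ hzK
    have h1 := hF1 (x + ξ) (z + ξ) hzK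
    rw [add_sub_add_right_eq_sub] at h1
    have h2 := (abs_le.mp hξ).2
    have h3 : 0 ≤ δ / 2 * ‖ξ‖ ^ 2 := by positivity
    linarith
  · intro L
    have hL : Filter.Tendsto (fun η => L η) (nhds 0) (nhds 0) := by
      have := L.continuous.tendsto 0
      rwa [map_zero] at this
    filter_upwards [hL.eventually htay] with η hη hwK
    have h1 := hB (x + L η) (w + η) hwK
    have h2 := (abs_le.mp hη).1
    rw [show x + L η - (w + η) = (x - w) + (L η - η) by abel,
      show x + L η - xh = (x - xh) + L η by abel] at h1
    have h3 : ⟪G x, L η⟫_ℝ = 2 * k * ⟪x - w, L η⟫_ℝ + δ * ⟪x - xh, L η⟫_ℝ + ⟪p, L η⟫_ℝ := by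
      have : G x = (2 * k) • (x - w) + δ • (x - xh) + p := by
        rw [hGx, add_assoc, ← hqq]; abel
      rw [this, inner_add_left, inner_add_left, real_inner_smul_left, real_inner_smul_left]
    have h4 : m = A x - V w - k * ‖x - w‖ ^ 2 - δ / 2 * ‖x - xh‖ ^ 2 - ⟪p, x - xh⟫_ℝ := by
      simp only [hmdef, hΘ]; linarith
    have e : ‖L η - η‖ ^ 2 / τ = k * ‖L η - η‖ ^ 2 := by rw [hk]; field_simp
    rw [e, real_inner_smul_left]
    rw [norm_add_sq_real, norm_add_sq_real, inner_add_right, inner_sub_right] at h1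
    nlinarith

end sums2

section calc3

/-- The `k`-th column of a matrix as a Euclidean vector. -/
def colv {d : ℕ} (M : Matrix (Fin d) (Fin d) ℝ) (k : Fin d) : EuclideanSpace ℝ (Fin d) :=
  WithLp.toLp 2 (fun i => M i k)

theorem colv_sum {d : ℕ} (M : Matrix (Fin d) (Fin d) ℝ) (k : Fin d) :
    colv M k = ∑ i, M i k • EuclideanSpace.single i (1 : ℝ) := by
  ext j
  simp [colv, Finset.sum_apply, Pi.single_apply]

theorem genL_line {d : ℕ} (σm : ℝ → EuclideanSpace ℝ (Fin d) → Matrix (Fin d) (Fin d) ℝ)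
    (φ : ℝ × EuclideanSpace ℝ (Fin d) → ℝ) (hφ : ContDiff ℝ 2 φ) (t : ℝ)
    (x : EuclideanSpace ℝ (Fin d)) (D : Fin d → ℝ) (g : Fin d → ℝ → ℝ)
    (h1 : ∀ k r, HasDerivAt (fun r : ℝ => φ (t, x + r • colv (σm t x) k)) (g k r) r)
    (h2 : ∀ k, HasDerivAt (g k) (D k) 0) :
    genL σm φ t x = 1 / 2 * ∑ k, D k := by
  have hF : ContDiff ℝ 2 (fun y => φ (t, y)) := hφ.comp (by fun_prop)
  set F : EuclideanSpace ℝ (Fin d) → ℝ := fun y => φ (t, y) with hFdef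
  have hF1 : Differentiable ℝ F := hF.differentiable (by norm_num)
  have hF2 : Differentiable ℝ (fderiv ℝ F) :=
    (hF.fderiv_right (m := 1) (by norm_num)).differentiable (by norm_num)
  set B := fderiv ℝ (fderiv ℝ F) x with hB
  have hH : ∀ i j, spaceHess φ t x i j = B (EuclideanSpace.single i 1)
      (EuclideanSpace.single j 1) := by
    intro i j
    have : HasFDerivAt (fun y => fderiv ℝ F y (EuclideanSpace.single j (1 : ℝ)))
        ((ContinuousLinearMap.apply ℝ ℝ (EuclideanSpace.single j (1 : ℝ))).comp B) x :=
      (ContinuousLinearMap.apply ℝ ℝ (EuclideanSpace.single j (1 : ℝ))).hasFDerivAt.comp x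
        (hF2 x).hasFDerivAt
    simp only [spaceHess]
    rw [this.fderiv]
    rfl
  have hD : ∀ k, D k = B (colv (σm t x) k) (colv (σm t x) k) := by
    intro k
    set v := colv (σm t x) k
    have hl : ∀ r : ℝ, HasDerivAt (fun r : ℝ => x + r • v) v r := by
      intro r
      simpa using ((hasDerivAt_id r).smul_const v).const_add x
    have hg : ∀ r, g k r = fderiv ℝ F (x + r • v) v := by
      intro r
      have h5 : HasFDerivAt F (fderiv ℝ F (x + r • v)) (x + r • v) :=
        (hF1 (x + r • v)).hasFDerivAt
      have h6 := HasFDerivAt.comp_hasDerivAt r h5 (hl r)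
      exact (h1 k r).unique h6
    have h3 : HasDerivAt (fun r : ℝ => fderiv ℝ F (x + r • v) v) (B v v) 0 := by
      have hc : HasFDerivAt (fun y => fderiv ℝ F y v)
        ((ContinuousLinearMap.apply ℝ ℝ v).comp B) (x + (0 : ℝ) • v) := by
        rw [zero_smul, add_zero]
        exact (ContinuousLinearMap.apply ℝ ℝ v).hasFDerivAt.comp x (hF2 x).hasFDerivAt
      have h6 := HasFDerivAt.comp_hasDerivAt (0 : ℝ) hc (hl 0)
      exact h6
    have h4 := h2 k
    rw [show g k = fun r => fderiv ℝ F (x + r • v) v from funext hg] at h4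
    exact h4.unique h3
  unfold genL
  congr 1
  simp only [Matrix.trace, Matrix.diag, Matrix.mul_apply, Matrix.transpose_apply, hH]
  simp only [hD]
  simp only [colv_sum, map_sum, map_smul, _root_.sum_apply,
    _root_.smul_apply, smul_eq_mul, Finset.sum_mul, Finset.mul_sum]
  rw [Finset.sum_comm]
  have : ∀ y : Fin d, ∑ x_1, ∑ i, σm t x x_1 i * σm t x y i *
      (B (EuclideanSpace.single y 1)) (EuclideanSpace.single x_1 1) =
      ∑ i, ∑ x_1, σm t x x_1 i * σm t x y i *
      (B (EuclideanSpace.single y 1)) (EuclideanSpace.single x_1 1) :=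
    fun y => Finset.sum_comm
  simp only [this]
  rw [Finset.sum_comm]
  refine Finset.sum_congr rfl fun k _ => ?_
  rw [Finset.sum_comm]
  refine Finset.sum_congr rfl fun i _ => Finset.sum_congr rfl fun j _ => ?_
  ring

theorem grad_line {d : ℕ} (φ : ℝ × EuclideanSpace ℝ (Fin d) → ℝ) (hφ : ContDiff ℝ 2 φ) (t : ℝ)
    (x v : EuclideanSpace ℝ (Fin d)) (D : ℝ)
    (h1 : HasDerivAt (fun r : ℝ => φ (t, x + r • v)) D 0) :
    ⟪spaceGrad φ t x, v⟫_ℝ = D := by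
  have hF : ContDiff ℝ 2 (fun y => φ (t, y)) := hφ.comp (by fun_prop)
  have hF1 : Differentiable ℝ (fun y => φ (t, y)) := hF.differentiable (by norm_num)
  have hl : HasDerivAt (fun r : ℝ => x + r • v) v 0 := by
    simpa using ((hasDerivAt_id (0 : ℝ)).smul_const v).const_add x
  have hc : HasFDerivAt (fun y => φ (t, y)) (fderiv ℝ (fun y => φ (t, y)) x) (x + (0 : ℝ) • v) := by
    rw [zero_smul, add_zero]; exact (hF1 x).hasFDerivAt
  have h6 := HasFDerivAt.comp_hasDerivAt (0 : ℝ) hc hl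
  have := h1.unique h6
  rw [this, spaceGrad, gradient, InnerProductSpace.toDual_symm_apply]

theorem Hstar_eq {d : ℕ} {A B : Type*}
    (σm : ℝ → EuclideanSpace ℝ (Fin d) → Matrix (Fin d) (Fin d) ℝ)
    (f : ℝ → EuclideanSpace ℝ (Fin d) → A → B → EuclideanSpace ℝ (Fin d))
    (Γ : ℝ → EuclideanSpace ℝ (Fin d) → A → B → ℝ)
    (t : ℝ) (x p : EuclideanSpace ℝ (Fin d)) (hσ : IsUnit (σm t x)) :
    Real.exp t * Hstar σm f Γ t x (Real.exp (-t) • mvec (σm t x)ᵀ p) =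
      ⨅ u : A, ⨆ v : B, (⟪p, f t x u v⟫_ℝ + Real.exp t * Γ t x u v) := by
  unfold Hstar
  rw [Real.mul_iInf_of_nonneg (Real.exp_pos t).le]
  congr 1; funext u
  rw [Real.mul_iSup_of_nonneg (Real.exp_pos t).le]
  congr 1; funext v
  unfold Hfun mvec
  have e1 : ⟪Matrix.toEuclideanLin (σm t x)ᵀ p,
      Matrix.toEuclideanLin (σm t x)⁻¹ (f t x u v)⟫_ℝ = ⟪p, f t x u v⟫_ℝ := by
    have hdet : IsUnit (σm t x).det := (Matrix.isUnit_iff_isUnit_det _).mp hσ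
    have h1 : (σm t x)ᵀ = (σm t x)ᴴ := by
      ext i j; simp [Matrix.conjTranspose_apply]
    rw [h1, Matrix.toEuclideanLin_conjTranspose_eq_adjoint, LinearMap.adjoint_inner_left]
    congr 1
    simp only [Matrix.toLpLin_apply, Matrix.mulVec_mulVec, Matrix.mul_nonsing_inv _ hdet,
      Matrix.one_mulVec]
  rw [real_inner_smul_left, e1, mul_add, ← mul_assoc, ← Real.exp_add, add_neg_cancel, Real.exp_zero,
    one_mul]

theorem infsup_le {A B : Type*} [Nonempty A] [Nonempty B] (F F' : A → B → ℝ) (c C : ℝ)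
    (h : ∀ a b, F a b ≤ F' a b + c) (hF : ∀ a b, |F a b| ≤ C) (hF' : ∀ a b, |F' a b| ≤ C) :
    (⨅ a, ⨆ b, F a b) ≤ (⨅ a, ⨆ b, F' a b) + c := by
  have bdA : ∀ a, BddAbove (range (F' a)) := fun a => ⟨C, by
    rintro _ ⟨b, rfl⟩; exact (abs_le.mp (hF' a b)).2⟩
  have bdA0 : ∀ a, BddAbove (range (F a)) := fun a => ⟨C, by
    rintro _ ⟨b, rfl⟩; exact (abs_le.mp (hF a b)).2⟩
  have bdB : BddBelow (range fun a => ⨆ b, F a b) := ⟨-C, by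
    rintro _ ⟨a, rfl⟩
    obtain ⟨b0⟩ := (inferInstance : Nonempty B)
    exact (abs_le.mp (hF a b0)).1.trans (le_ciSup (bdA0 a) b0)⟩
  rw [← sub_le_iff_le_add]
  apply le_ciInf
  intro a
  rw [sub_le_iff_le_add]
  refine (ciInf_le bdB a).trans ?_
  apply ciSup_le
  intro b
  have := le_ciSup (bdA a) b
  linarith [h a b]

end calc3

section test4

/-- The penalization function. -/
def psi {d : ℕ} (lam T : ℝ) (m : ℕ) (p : ℝ × EuclideanSpace ℝ (Fin d)) : ℝ :=
  Real.exp (lam * (T - p.1)) * (1 + ‖p.2‖ ^ 2) ^ (m + 2)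

/-- Directional derivative of the penalization function. -/
def psi1 {d : ℕ} (lam T : ℝ) (m : ℕ) (t : ℝ) (x v : EuclideanSpace ℝ (Fin d)) : ℝ :=
  Real.exp (lam * (T - t)) * (((m : ℝ) + 2) * (1 + ‖x‖ ^ 2) ^ (m + 1) * (2 * ⟪x, v⟫_ℝ))

/-- Second directional derivative of the penalization function. -/
def psi2 {d : ℕ} (lam T : ℝ) (m : ℕ) (t : ℝ) (x v : EuclideanSpace ℝ (Fin d)) : ℝ :=
  Real.exp (lam * (T - t)) * (((m : ℝ) + 2) *
    ((((m : ℝ) + 1) * (1 + ‖x‖ ^ 2) ^ m * (2 * ⟪x, v⟫_ℝ)) * (2 * ⟪x, v⟫_ℝ) +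
      (1 + ‖x‖ ^ 2) ^ (m + 1) * (2 * ‖v‖ ^ 2)))

variable {d : ℕ} {W : Type*} [NormedAddCommGroup W] [InnerProductSpace ℝ W]

/-- The test functions. -/
def tf (b lam T : ℝ) (m : ℕ) (ι : (ℝ × EuclideanSpace ℝ (Fin d)) →L[ℝ] W) (q : W)
    (Y : W →L[ℝ] W) (p0 : ℝ × EuclideanSpace ℝ (Fin d)) (p : ℝ × EuclideanSpace ℝ (Fin d)) : ℝ :=
  b * psi lam T m p + (⟪q, ι (p - p0)⟫_ℝ + ⟪Y (ι (p - p0)), ι (p - p0)⟫_ℝ)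

theorem psi_contDiff (lam T : ℝ) (m : ℕ) :
    ContDiff ℝ 2 (psi (d := d) lam T m) := by
  unfold psi
  refine ContDiff.mul ?_ (ContDiff.pow (contDiff_const.add (contDiff_snd.norm_sq ℝ)) _)
  exact (contDiff_const.mul (contDiff_const.sub contDiff_fst)).exp

theorem tf_contDiff (b lam T : ℝ) (m : ℕ) (ι : (ℝ × EuclideanSpace ℝ (Fin d)) →L[ℝ] W) (q : W)
    (Y : W →L[ℝ] W) (p0 : ℝ × EuclideanSpace ℝ (Fin d)) :
    ContDiff ℝ 2 (tf b lam T m ι q Y p0) := by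
  unfold tf
  have h1 : ContDiff ℝ 2 (fun p : ℝ × EuclideanSpace ℝ (Fin d) => ι (p - p0)) :=
    ι.contDiff.comp (contDiff_id.sub contDiff_const)
  exact (contDiff_const.mul (psi_contDiff lam T m)).add
    ((contDiff_const.inner ℝ h1).add ((Y.contDiff.comp h1).inner ℝ h1))

theorem tf_time (b lam T : ℝ) (m : ℕ) (ι : (ℝ × EuclideanSpace ℝ (Fin d)) →L[ℝ] W) (q : W)
    (Y : W →L[ℝ] W) (t : ℝ) (x : EuclideanSpace ℝ (Fin d)) :
    timeDeriv (tf b lam T m ι q Y (t, x)) t x = - (lam * (b * psi lam T m (t, x))) + ⟪q, ι (1, 0)⟫_ℝ := by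
  unfold timeDeriv
  have e : (fun s => tf b lam T m ι q Y (t, x) (s, x)) = fun s : ℝ =>
      b * (Real.exp (lam * (T - s)) * (1 + ‖x‖ ^ 2) ^ (m + 2)) +
      ((s - t) * ⟪q, ι (1, 0)⟫_ℝ + (s - t) ^ 2 * ⟪Y (ι (1, 0)), ι (1, 0)⟫_ℝ) := by
    funext s
    have : ι ((s, x) - (t, x)) = (s - t) • ι (1, 0) := by
      rw [← map_smul]; congr 1; simp
    unfold tf psi
    rw [this, map_smul, real_inner_smul_right, real_inner_smul_right, real_inner_smul_left]
    ring
  rw [e]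
  have h1 : HasDerivAt (fun s : ℝ => lam * (T - s)) (lam * (-1)) t := by
    simpa using ((hasDerivAt_id t).const_sub T).const_mul lam
  have h2 : HasDerivAt (fun s : ℝ => s - t) 1 t := (hasDerivAt_id t).sub_const t
  have h3 := (((h1.exp).mul_const ((1 + ‖x‖ ^ 2) ^ (m + 2))).const_mul b).add
    ((h2.mul_const ⟪q, ι (1, 0)⟫_ℝ).add ((h2.pow 2).mul_const ⟪Y (ι (1, 0)), ι (1, 0)⟫_ℝ))
  refine (HasDerivAt.deriv h3).trans ?_
  simp [psi]
  ring

/-- First derivative of the test function along lines. -/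
def tfg (b lam T : ℝ) (m : ℕ) (ι : (ℝ × EuclideanSpace ℝ (Fin d)) →L[ℝ] W) (q : W)
    (Y : W →L[ℝ] W) (t : ℝ) (x v : EuclideanSpace ℝ (Fin d)) (r : ℝ) : ℝ :=
  b * (Real.exp (lam * (T - t)) * (((m : ℝ) + 2) *
    (1 + (‖x‖ ^ 2 + r * (2 * ⟪x, v⟫_ℝ) + r ^ 2 * ‖v‖ ^ 2)) ^ (m + 1) *
      (2 * ⟪x, v⟫_ℝ + 2 * r * ‖v‖ ^ 2))) +
  (⟪q, ι (0, v)⟫_ℝ + 2 * r * ⟪Y (ι (0, v)), ι (0, v)⟫_ℝ)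

theorem tf_line1 (b lam T : ℝ) (m : ℕ) (ι : (ℝ × EuclideanSpace ℝ (Fin d)) →L[ℝ] W) (q : W)
    (Y : W →L[ℝ] W) (t : ℝ) (x v : EuclideanSpace ℝ (Fin d)) (r : ℝ) :
    HasDerivAt (fun r : ℝ => tf b lam T m ι q Y (t, x) (t, x + r • v))
      (tfg b lam T m ι q Y t x v r) r := by
  have e : (fun s : ℝ => tf b lam T m ι q Y (t, x) (t, x + s • v)) = fun s : ℝ =>
      b * (Real.exp (lam * (T - t)) *
        (1 + (‖x‖ ^ 2 + s * (2 * ⟪x, v⟫_ℝ) + s ^ 2 * ‖v‖ ^ 2)) ^ (m + 2)) +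
      (s * ⟪q, ι (0, v)⟫_ℝ + s ^ 2 * ⟪Y (ι (0, v)), ι (0, v)⟫_ℝ) := by
    funext s
    have : ι ((t, x + s • v) - (t, x)) = s • ι (0, v) := by
      rw [← map_smul]; congr 1; simp
    unfold tf psi
    rw [this, map_smul, real_inner_smul_right, real_inner_smul_right, real_inner_smul_left]
    dsimp only
    rw [norm_add_sq_real, real_inner_smul_right, norm_smul, mul_pow, Real.norm_eq_abs, sq_abs]
    ring
  rw [e]
  have h2 : HasDerivAt (fun s : ℝ => s) 1 r := hasDerivAt_id r
  have h4 := (((h2.mul_const (2 * ⟪x, v⟫_ℝ)).const_add (‖x‖ ^ 2)).add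
    ((h2.pow 2).mul_const (‖v‖ ^ 2))).const_add 1
  have h3 := (((h4.pow (m + 2)).const_mul (Real.exp (lam * (T - t)))).const_mul b).add
    ((h2.mul_const ⟪q, ι (0, v)⟫_ℝ).add ((h2.pow 2).mul_const ⟪Y (ι (0, v)), ι (0, v)⟫_ℝ))
  refine HasDerivAt.congr_deriv h3 ?_
  simp [tfg]

theorem tf_line2 (b lam T : ℝ) (m : ℕ) (ι : (ℝ × EuclideanSpace ℝ (Fin d)) →L[ℝ] W) (q : W)
    (Y : W →L[ℝ] W) (t : ℝ) (x v : EuclideanSpace ℝ (Fin d)) :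
    HasDerivAt (tfg b lam T m ι q Y t x v)
      (b * psi2 lam T m t x v + 2 * ⟪Y (ι (0, v)), ι (0, v)⟫_ℝ) 0 := by
  unfold tfg
  have h2 : HasDerivAt (fun s : ℝ => s) 1 0 := hasDerivAt_id 0
  have h4 := (((h2.mul_const (2 * ⟪x, v⟫_ℝ)).const_add (‖x‖ ^ 2)).add
    ((h2.pow 2).mul_const (‖v‖ ^ 2))).const_add 1
  have h5 := ((h2.const_mul 2).mul_const (‖v‖ ^ 2)).const_add (2 * ⟪x, v⟫_ℝ)
  have h3 := (((((h4.pow (m + 1)).const_mul ((m : ℝ) + 2)).mul h5).const_mul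
    (Real.exp (lam * (T - t)))).const_mul b).add
    (((h2.const_mul 2).mul_const ⟪Y (ι (0, v)), ι (0, v)⟫_ℝ).const_add ⟪q, ι (0, v)⟫_ℝ)
  refine HasDerivAt.congr_deriv h3 ?_
  simp [psi2]
  left
  ring

theorem psi1_bound (lam T : ℝ) (m : ℕ) (t : ℝ) (x v : EuclideanSpace ℝ (Fin d)) (C : ℝ)
    (hv : ‖v‖ ≤ C * (1 + ‖x‖)) :
    |psi1 lam T m t x v| ≤ 4 * (m + 2) * |C| * psi lam T m (t, x) := by
  unfold psi1 psi
  dsimp only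
  have h1 : |⟪x, v⟫_ℝ| ≤ ‖x‖ * (|C| * (1 + ‖x‖)) :=
    (abs_real_inner_le_norm x v).trans (by
      gcongr
      exact hv.trans (by gcongr; exact le_abs_self C))
  have h2 : ‖x‖ * (|C| * (1 + ‖x‖)) ≤ |C| * (2 * (1 + ‖x‖ ^ 2)) := by
    have : ‖x‖ * (1 + ‖x‖) ≤ 2 * (1 + ‖x‖ ^ 2) := by nlinarith [sq_nonneg (‖x‖ - 1)]
    nlinarith [abs_nonneg C]
  rw [abs_mul, abs_mul, abs_mul, abs_of_pos (Real.exp_pos _),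
    abs_of_pos (by positivity : (0 : ℝ) < m + 2),
    abs_of_pos (by positivity : 0 < (1 + ‖x‖ ^ 2) ^ (m + 1)), abs_mul, abs_two]
  calc _ ≤ Real.exp (lam * (T - t)) * ((↑m + 2) * (1 + ‖x‖ ^ 2) ^ (m + 1) *
        (2 * (|C| * (2 * (1 + ‖x‖ ^ 2))))) := by gcongr; exact h1.trans h2
    _ = _ := by ring

theorem psi2_bound (lam T : ℝ) (m : ℕ) (t : ℝ) (x v : EuclideanSpace ℝ (Fin d)) (C : ℝ)
    (hv : ‖v‖ ^ 2 ≤ C) :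
    psi2 lam T m t x v ≤ (m + 2) * (4 * m + 6) * C * psi lam T m (t, x) := by
  unfold psi2 psi
  dsimp only
  have hC : 0 ≤ C := (sq_nonneg _).trans hv
  have h1 : ⟪x, v⟫_ℝ ^ 2 ≤ ‖x‖ ^ 2 * ‖v‖ ^ 2 := by
    rw [← sq_abs, ← mul_pow]
    gcongr
    exact abs_real_inner_le_norm x v
  have h2 : ‖x‖ ^ 2 * ‖v‖ ^ 2 ≤ (1 + ‖x‖ ^ 2) ^ 2 * C := by
    gcongr
    nlinarith [sq_nonneg ‖x‖]
  have h3 : (1 + ‖x‖ ^ 2) ^ (m + 1) * (2 * ‖v‖ ^ 2) ≤ (1 + ‖x‖ ^ 2) ^ (m + 2) * (2 * C) := by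
    gcongr
    · nlinarith [sq_nonneg ‖x‖]
    · norm_num
  have h4 : (((m : ℝ) + 1) * (1 + ‖x‖ ^ 2) ^ m * (2 * ⟪x, v⟫_ℝ)) * (2 * ⟪x, v⟫_ℝ) ≤
      4 * (m + 1) * (1 + ‖x‖ ^ 2) ^ m * ((1 + ‖x‖ ^ 2) ^ 2 * C) := by
    calc _ = 4 * ((m : ℝ) + 1) * (1 + ‖x‖ ^ 2) ^ m * ⟪x, v⟫_ℝ ^ 2 := by ring
      _ ≤ _ := by gcongr; exact h1.trans h2
  calc _ ≤ Real.exp (lam * (T - t)) * ((m + 2) *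
      (4 * (m + 1) * (1 + ‖x‖ ^ 2) ^ m * ((1 + ‖x‖ ^ 2) ^ 2 * C) +
      (1 + ‖x‖ ^ 2) ^ (m + 2) * (2 * C))) := by gcongr
    _ = _ := by ring

theorem psi2_nonneg (lam T : ℝ) (m : ℕ) (t : ℝ) (x v : EuclideanSpace ℝ (Fin d)) :
    0 ≤ psi2 lam T m t x v := by
  unfold psi2
  have : 0 ≤ (((m : ℝ) + 1) * (1 + ‖x‖ ^ 2) ^ m * (2 * ⟪x, v⟫_ℝ)) * (2 * ⟪x, v⟫_ℝ) := by
    rw [mul_assoc]; exact mul_nonneg (by positivity) (mul_self_nonneg _)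
  positivity

theorem pde_val {A B : Type*}
    (σm : ℝ → EuclideanSpace ℝ (Fin d) → Matrix (Fin d) (Fin d) ℝ)
    (f : ℝ → EuclideanSpace ℝ (Fin d) → A → B → EuclideanSpace ℝ (Fin d))
    (Γ : ℝ → EuclideanSpace ℝ (Fin d) → A → B → ℝ) (t : ℝ) (x : EuclideanSpace ℝ (Fin d))
    (hσ : IsUnit (σm t x)) (b lam T : ℝ) (m : ℕ)
    (ι : (ℝ × EuclideanSpace ℝ (Fin d)) →L[ℝ] W) (q : W) (Y : W →L[ℝ] W) (u : ℝ) :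
    -(timeDeriv (tf b lam T m ι q Y (t, x)) t x) + u - genL σm (tf b lam T m ι q Y (t, x)) t x -
      Real.exp t * Hstar σm f Γ t x (Real.exp (-t) •
        mvec (σm t x)ᵀ (spaceGrad (tf b lam T m ι q Y (t, x)) t x)) =
    lam * (b * psi lam T m (t, x)) - ⟪q, ι (1, 0)⟫_ℝ + u -
      1 / 2 * ∑ k, (b * psi2 lam T m t x (colv (σm t x) k) +
        2 * ⟪Y (ι (0, colv (σm t x) k)), ι (0, colv (σm t x) k)⟫_ℝ) -
      ⨅ a : A, ⨆ a' : B, (b * psi1 lam T m t x (f t x a a') +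
        (⟪q, ι (0, f t x a a')⟫_ℝ + Real.exp t * Γ t x a a')) := by
  rw [tf_time, Hstar_eq σm f Γ t x _ hσ,
    genL_line σm _ (tf_contDiff b lam T m ι q Y (t, x)) t x _ _
      (fun k r => tf_line1 b lam T m ι q Y t x (colv (σm t x) k) r)
      (fun k => tf_line2 b lam T m ι q Y t x (colv (σm t x) k))]
  have h : ∀ v, ⟪spaceGrad (tf b lam T m ι q Y (t, x)) t x, v⟫_ℝ =
      b * psi1 lam T m t x v + ⟪q, ι (0, v)⟫_ℝ := by
    intro v
    rw [grad_line _ (tf_contDiff b lam T m ι q Y (t, x)) t x v _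
      (tf_line1 b lam T m ι q Y t x v 0)]
    simp [tfg, psi1]
  simp only [h, add_assoc]
  ring

theorem G_bdd {A B : Type*}
    (f : ℝ → EuclideanSpace ℝ (Fin d) → A → B → EuclideanSpace ℝ (Fin d))
    (Γ : ℝ → EuclideanSpace ℝ (Fin d) → A → B → ℝ) (t : ℝ) (x : EuclideanSpace ℝ (Fin d))
    (Cf CG : ℝ) (hf : ∀ a a', ‖f t x a a'‖ ≤ Cf * (1 + ‖x‖)) (hG : ∀ a a', |Γ t x a a'| ≤ CG)
    (ι : (ℝ × EuclideanSpace ℝ (Fin d)) →L[ℝ] W) (q : W) :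
    ∃ C, 0 ≤ C ∧ ∀ a a', |⟪q, ι (0, f t x a a')⟫_ℝ + Real.exp t * Γ t x a a'| ≤ C := by
  refine ⟨‖q‖ * (‖ι‖ * (|Cf| * (1 + ‖x‖))) + Real.exp t * |CG|, by positivity, fun a a' => ?_⟩
  refine (abs_add_le _ _).trans ?_
  gcongr
  · refine (abs_real_inner_le_norm _ _).trans ?_
    gcongr
    refine (ι.le_opNorm _).trans ?_
    gcongr
    rw [Prod.norm_mk, norm_zero, max_eq_right (norm_nonneg _)]
    exact (hf a a').trans (by gcongr; exact le_abs_self _)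
  · rw [abs_mul, abs_of_pos (Real.exp_pos t)]
    exact mul_le_mul_of_nonneg_left ((hG a a').trans (le_abs_self _)) (Real.exp_pos t).le

theorem pde_sub {A B : Type*} [Nonempty A] [Nonempty B]
    (σm : ℝ → EuclideanSpace ℝ (Fin d) → Matrix (Fin d) (Fin d) ℝ)
    (f : ℝ → EuclideanSpace ℝ (Fin d) → A → B → EuclideanSpace ℝ (Fin d))
    (Γ : ℝ → EuclideanSpace ℝ (Fin d) → A → B → ℝ) (t : ℝ) (x : EuclideanSpace ℝ (Fin d))
    (hσ : IsUnit (σm t x)) (b lam T : ℝ) (m : ℕ)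
    (ι : (ℝ × EuclideanSpace ℝ (Fin d)) →L[ℝ] W) (q : W) (Y : W →L[ℝ] W) (u : ℝ)
    (Cf CG C2 : ℝ) (hf : ∀ a a', ‖f t x a a'‖ ≤ Cf * (1 + ‖x‖)) (hG : ∀ a a', |Γ t x a a'| ≤ CG)
    (hC2 : ∀ k, ‖colv (σm t x) k‖ ^ 2 ≤ C2) (hb : 0 ≤ b)
    (hlam : 1 / 2 * (d * ((m + 2) * (4 * m + 6) * C2)) + 4 * (m + 2) * |Cf| ≤ lam)
    (hv : -(timeDeriv (tf b lam T m ι q Y (t, x)) t x) + u -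
      genL σm (tf b lam T m ι q Y (t, x)) t x -
      Real.exp t * Hstar σm f Γ t x (Real.exp (-t) •
        mvec (σm t x)ᵀ (spaceGrad (tf b lam T m ι q Y (t, x)) t x)) ≤ 0) :
    u ≤ ⟪q, ι (1, 0)⟫_ℝ +
      ∑ k, ⟪Y (ι (0, colv (σm t x) k)), ι (0, colv (σm t x) k)⟫_ℝ +
      ⨅ a : A, ⨆ a' : B, (⟪q, ι (0, f t x a a')⟫_ℝ + Real.exp t * Γ t x a a') := by
  rw [pde_val σm f Γ t x hσ] at hv
  obtain ⟨C, hC0, hC⟩ := G_bdd f Γ t x Cf CG hf hG ι q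
  have hψ : 0 ≤ psi lam T m (t, x) := by unfold psi; positivity
  have hc : ∀ a a', |b * psi1 lam T m t x (f t x a a')| ≤
      b * (4 * (m + 2) * |Cf| * psi lam T m (t, x)) := by
    intro a a'
    rw [abs_mul, abs_of_nonneg hb]
    gcongr
    exact psi1_bound lam T m t x _ Cf (hf a a')
  have h1 := infsup_le (fun a a' => b * psi1 lam T m t x (f t x a a') +
        (⟪q, ι (0, f t x a a')⟫_ℝ + Real.exp t * Γ t x a a'))
    (fun a a' => ⟪q, ι (0, f t x a a')⟫_ℝ + Real.exp t * Γ t x a a')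
    (b * (4 * (m + 2) * |Cf| * psi lam T m (t, x)))
    (b * (4 * (m + 2) * |Cf| * psi lam T m (t, x)) + C)
    (fun a a' => by linarith [(abs_le.mp (hc a a')).2])
    (fun a a' => (abs_add_le _ _).trans (add_le_add (hc a a') (hC a a')))
    (fun a a' => (hC a a').trans (le_add_of_nonneg_left (by positivity)))
  have h2 : ∑ k, b * psi2 lam T m t x (colv (σm t x) k) ≤
      d * (b * ((m + 2) * (4 * m + 6) * C2 * psi lam T m (t, x))) := by
    have := Finset.sum_le_card_nsmul (Finset.univ : Finset (Fin d))
      (fun k => b * psi2 lam T m t x (colv (σm t x) k))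
      (b * ((m + 2) * (4 * m + 6) * C2 * psi lam T m (t, x)))
      (fun k _ => by gcongr; exact psi2_bound lam T m t x _ C2 (hC2 k))
    simpa using this
  have h3 : (1 / 2 * (d * ((m + 2) * (4 * m + 6) * C2)) + 4 * (m + 2) * |Cf|) *
      (b * psi lam T m (t, x)) ≤ lam * (b * psi lam T m (t, x)) := by gcongr
  rw [Finset.sum_add_distrib, ← Finset.mul_sum] at hv
  rw [← Finset.mul_sum] at hv h2
  linarith

theorem pde_sup {A B : Type*} [Nonempty A] [Nonempty B]
    (σm : ℝ → EuclideanSpace ℝ (Fin d) → Matrix (Fin d) (Fin d) ℝ)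
    (f : ℝ → EuclideanSpace ℝ (Fin d) → A → B → EuclideanSpace ℝ (Fin d))
    (Γ : ℝ → EuclideanSpace ℝ (Fin d) → A → B → ℝ) (t : ℝ) (x : EuclideanSpace ℝ (Fin d))
    (hσ : IsUnit (σm t x)) (b lam T : ℝ) (m : ℕ)
    (ι : (ℝ × EuclideanSpace ℝ (Fin d)) →L[ℝ] W) (q : W) (Y : W →L[ℝ] W) (u : ℝ)
    (Cf CG C2 : ℝ) (hf : ∀ a a', ‖f t x a a'‖ ≤ Cf * (1 + ‖x‖)) (hG : ∀ a a', |Γ t x a a'| ≤ CG)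
    (hC2 : ∀ k, ‖colv (σm t x) k‖ ^ 2 ≤ C2) (hb : 0 ≤ b)
    (hlam : 1 / 2 * (d * ((m + 2) * (4 * m + 6) * C2)) + 4 * (m + 2) * |Cf| ≤ lam)
    (hv : 0 ≤ -(timeDeriv (tf (-b) lam T m ι q Y (t, x)) t x) + u -
      genL σm (tf (-b) lam T m ι q Y (t, x)) t x -
      Real.exp t * Hstar σm f Γ t x (Real.exp (-t) •
        mvec (σm t x)ᵀ (spaceGrad (tf (-b) lam T m ι q Y (t, x)) t x))) :
    ⟪q, ι (1, 0)⟫_ℝ +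
      ∑ k, ⟪Y (ι (0, colv (σm t x) k)), ι (0, colv (σm t x) k)⟫_ℝ +
      (⨅ a : A, ⨆ a' : B, (⟪q, ι (0, f t x a a')⟫_ℝ + Real.exp t * Γ t x a a')) ≤ u := by
  rw [pde_val σm f Γ t x hσ] at hv
  obtain ⟨C, hC0, hC⟩ := G_bdd f Γ t x Cf CG hf hG ι q
  have hψ : 0 ≤ psi lam T m (t, x) := by unfold psi; positivity
  have hc : ∀ a a', |-b * psi1 lam T m t x (f t x a a')| ≤
      b * (4 * (m + 2) * |Cf| * psi lam T m (t, x)) := by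
    intro a a'
    rw [abs_mul, abs_neg, abs_of_nonneg hb]
    gcongr
    exact psi1_bound lam T m t x _ Cf (hf a a')
  have h1 := infsup_le 
    (fun a a' => ⟪q, ι (0, f t x a a')⟫_ℝ + Real.exp t * Γ t x a a')
    (fun a a' => -b * psi1 lam T m t x (f t x a a') +
        (⟪q, ι (0, f t x a a')⟫_ℝ + Real.exp t * Γ t x a a'))
    (b * (4 * (m + 2) * |Cf| * psi lam T m (t, x)))
    (b * (4 * (m + 2) * |Cf| * psi lam T m (t, x)) + C)
    (fun a a' => by linarith [(abs_le.mp (hc a a')).1])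
    (fun a a' => (hC a a').trans (le_add_of_nonneg_left (by positivity)))
    (fun a a' => (abs_add_le _ _).trans (add_le_add (hc a a') (hC a a')))
  have h2 : ∑ k, b * psi2 lam T m t x (colv (σm t x) k) ≤
      d * (b * ((m + 2) * (4 * m + 6) * C2 * psi lam T m (t, x))) := by
    have := Finset.sum_le_card_nsmul (Finset.univ : Finset (Fin d))
      (fun k => b * psi2 lam T m t x (colv (σm t x) k))
      (b * ((m + 2) * (4 * m + 6) * C2 * psi lam T m (t, x)))
      (fun k _ => by gcongr; exact psi2_bound lam T m t x _ C2 (hC2 k))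
    simpa using this
  have h3 : (1 / 2 * (d * ((m + 2) * (4 * m + 6) * C2)) + 4 * (m + 2) * |Cf|) *
      (b * psi lam T m (t, x)) ≤ lam * (b * psi lam T m (t, x)) := by gcongr
  rw [Finset.sum_add_distrib, ← Finset.mul_sum] at hv
  rw [← Finset.mul_sum] at hv h2
  linarith

end test4

section core5

variable {d : ℕ} {W : Type*} [NormedAddCommGroup W] [InnerProductSpace ℝ W]

theorem ev_shift (e : (ℝ × EuclideanSpace ℝ (Fin d)) ≃L[ℝ] W) (T R t : ℝ)
    (x : EuclideanSpace ℝ (Fin d)) (hx : ‖x‖ < R) (P : W → Prop)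
    (h : ∀ᶠ ξ in nhds (0 : W), e.symm (e (t, x) + ξ) ∈
      Icc (0 : ℝ) T ×ˢ Metric.closedBall (0 : EuclideanSpace ℝ (Fin d)) R → P ξ) :
    ∀ᶠ p in nhdsWithin (t, x) (Icc (0 : ℝ) T ×ˢ (univ : Set (EuclideanSpace ℝ (Fin d)))),
      P (e (p - (t, x))) := by
  have hc : Filter.Tendsto (fun p : ℝ × EuclideanSpace ℝ (Fin d) => e (p - (t, x)))
      (nhds (t, x)) (nhds 0) := by
    have : Continuous (fun p : ℝ × EuclideanSpace ℝ (Fin d) => e (p - (t, x))) := by fun_prop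
    simpa using this.tendsto (t, x)
  have h1 := hc.eventually h
  have h2 : ∀ᶠ p : ℝ × EuclideanSpace ℝ (Fin d) in nhds (t, x), ‖p.2‖ < R := by
    have : Continuous (fun p : ℝ × EuclideanSpace ℝ (Fin d) => ‖p.2‖) := by fun_prop
    exact this.continuousAt.eventually_lt continuousAt_const hx
  filter_upwards [nhdsWithin_le_nhds h1, nhdsWithin_le_nhds h2, self_mem_nhdsWithin] with p h1 h2 h3
  apply h1
  rw [map_add]
  simp only [ContinuousLinearEquiv.symm_apply_apply, add_sub_cancel]
  exact ⟨h3.1, by simpa using h2.le⟩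

theorem local_max (e : (ℝ × EuclideanSpace ℝ (Fin d)) ≃L[ℝ] W) (T R t : ℝ)
    (x : EuclideanSpace ℝ (Fin d)) (hx : ‖x‖ < R)
    (b lam : ℝ) (m : ℕ) (q : W) (Y : W →L[ℝ] W)
    (ub : ℝ × EuclideanSpace ℝ (Fin d) → ℝ)
    (h : ∀ᶠ ξ in nhds (0 : W), e.symm (e (t, x) + ξ) ∈
      Icc (0 : ℝ) T ×ˢ Metric.closedBall (0 : EuclideanSpace ℝ (Fin d)) R →
      ub (e.symm (e (t, x) + ξ)) - b * psi lam T m (e.symm (e (t, x) + ξ)) ≤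
      ub (t, x) - b * psi lam T m (t, x) + ⟪q, ξ⟫_ℝ + ⟪Y ξ, ξ⟫_ℝ) :
    IsLocalMaxOn (fun p => ub p - tf b lam T m (e : _ →L[ℝ] W) q Y (t, x) p)
      (Icc (0 : ℝ) T ×ˢ (univ : Set (EuclideanSpace ℝ (Fin d)))) (t, x) := by
  have := ev_shift e T R t x hx _ h
  unfold IsLocalMaxOn IsMaxFilter
  filter_upwards [this] with p hp
  rw [map_add] at hp
  simp only [ContinuousLinearEquiv.symm_apply_apply, add_sub_cancel] at hp
  simp only [tf, ContinuousLinearEquiv.coe_coe, sub_self, map_zero, inner_zero_right]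
  linarith

theorem local_min (e : (ℝ × EuclideanSpace ℝ (Fin d)) ≃L[ℝ] W) (T R t : ℝ)
    (x : EuclideanSpace ℝ (Fin d)) (hx : ‖x‖ < R)
    (b lam : ℝ) (m : ℕ) (q : W) (Y : W →L[ℝ] W)
    (ub : ℝ × EuclideanSpace ℝ (Fin d) → ℝ)
    (h : ∀ᶠ ξ in nhds (0 : W), e.symm (e (t, x) + ξ) ∈
      Icc (0 : ℝ) T ×ˢ Metric.closedBall (0 : EuclideanSpace ℝ (Fin d)) R →
      ub (t, x) - b * psi lam T m (t, x) + ⟪q, ξ⟫_ℝ + ⟪Y ξ, ξ⟫_ℝ ≤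
      ub (e.symm (e (t, x) + ξ)) - b * psi lam T m (e.symm (e (t, x) + ξ))) :
    IsLocalMinOn (fun p => ub p - tf b lam T m (e : _ →L[ℝ] W) q Y (t, x) p)
      (Icc (0 : ℝ) T ×ˢ (univ : Set (EuclideanSpace ℝ (Fin d)))) (t, x) := by
  have := ev_shift e T R t x hx _ h
  unfold IsLocalMinOn IsMinFilter
  filter_upwards [this] with p hp
  rw [map_add] at hp
  simp only [ContinuousLinearEquiv.symm_apply_apply, add_sub_cancel] at hp
  simp only [tf, ContinuousLinearEquiv.coe_coe, sub_self, map_zero, inner_zero_right]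
  linarith

theorem sub_cases (a b c : ℝ) (h : min a (max b c) ≤ 0) : a ≤ 0 ∨ (b ≤ 0 ∧ c ≤ 0) := by
  rcases min_le_iff.mp h with h | h
  · exact Or.inl h
  · exact Or.inr (max_le_iff.mp h)

theorem sup_cases (a b c : ℝ) (h : 0 ≤ min a (max b c)) : 0 ≤ a ∧ (0 ≤ b ∨ 0 ≤ c) := by
  rcases le_min_iff.mp h with ⟨h1, h2⟩
  exact ⟨h1, le_max_iff.mp h2⟩

/-- The linear map sending columns of `σ'` to columns of `σ`. -/
def Mmap (S S' : Matrix (Fin d) (Fin d) ℝ) :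
    EuclideanSpace ℝ (Fin d) →L[ℝ] EuclideanSpace ℝ (Fin d) :=
  LinearMap.toContinuousLinearMap (Matrix.toEuclideanLin (S * S'⁻¹))

theorem Mmap_col (S S' : Matrix (Fin d) (Fin d) ℝ) (h : IsUnit S') (k : Fin d) :
    Mmap S S' (colv S' k) = colv S k := by
  have hdet : IsUnit S'.det := (Matrix.isUnit_iff_isUnit_det _).mp h
  have : ∀ M : Matrix (Fin d) (Fin d) ℝ, colv M k = WithLp.toLp 2 (M *ᵥ Pi.single k 1) := by
    intro M; ext i; simp [colv]
  rw [this, this]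
  simp only [Mmap, LinearMap.coe_toContinuousLinearMap', Matrix.toLpLin_apply,
    Matrix.mulVec_mulVec]
  rw [Matrix.mul_assoc, Matrix.nonsing_inv_mul _ hdet, Matrix.mul_one]

/-- `L = id × M` transported to `W`. -/
def Lmap (e : (ℝ × EuclideanSpace ℝ (Fin d)) ≃L[ℝ] W)
    (M : EuclideanSpace ℝ (Fin d) →L[ℝ] EuclideanSpace ℝ (Fin d)) : W →L[ℝ] W :=
  (e : _ →L[ℝ] W).comp (((ContinuousLinearMap.id ℝ ℝ).prodMap M).comp (e.symm : W →L[ℝ] _))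

theorem Lmap_apply (e : (ℝ × EuclideanSpace ℝ (Fin d)) ≃L[ℝ] W)
    (M : EuclideanSpace ℝ (Fin d) →L[ℝ] EuclideanSpace ℝ (Fin d)) (v : EuclideanSpace ℝ (Fin d)) :
    Lmap e M (e (0, v)) = e (0, M v) := by
  simp [Lmap]

theorem exists_Y [CompleteSpace W] (X L : W →L[ℝ] W) (τ δ : ℝ) :
    ∃ Y : W →L[ℝ] W, ∀ η, ⟪Y η, η⟫_ℝ =
      1 / 2 * ⟪X (L η), L η⟫_ℝ - ‖L η - η‖ ^ 2 / τ - δ * ‖L η‖ ^ 2 := by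
  set J := L - ContinuousLinearMap.id ℝ W with hJ
  refine ⟨(ContinuousLinearMap.adjoint L).comp ((((1 / 2 : ℝ) • X -
    δ • ContinuousLinearMap.id ℝ W)).comp L) - (1 / τ) • (ContinuousLinearMap.adjoint J).comp J,
    fun η => ?_⟩
  have h1 : J η = L η - η := by simp [hJ]
  simp only [_root_.sub_apply, ContinuousLinearMap.comp_apply, _root_.smul_apply, inner_sub_left,
    ContinuousLinearMap.adjoint_inner_left, real_inner_smul_left, ContinuousLinearMap.id_apply,
    h1, real_inner_self_eq_norm_sq]
  have h2 : ‖L η - η‖ ^ 2 = ⟪L η, L η - η⟫_ℝ - ⟪η, L η - η⟫_ℝ := by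
    rw [← inner_sub_left, real_inner_self_eq_norm_sq]
  rw [h2]
  ring

theorem colv_norm_sq (M : Matrix (Fin d) (Fin d) ℝ) (k : Fin d) (c : ℝ)
    (h : ∀ i j, |M i j| ≤ c) : ‖colv M k‖ ^ 2 ≤ d * c ^ 2 := by
  rw [EuclideanSpace.norm_sq_eq]
  have := Finset.sum_le_card_nsmul (Finset.univ : Finset (Fin d))
      (fun i => ‖(colv M k) i‖ ^ 2) (c ^ 2)
      (fun i _ => by
        gcongr
        simpa [colv] using h i k)
  simpa using this

theorem colv_sub (M N : Matrix (Fin d) (Fin d) ℝ) (k : Fin d) :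
    colv M k - colv N k = colv (M - N) k := by
  ext i; simp [colv]

set_option maxHeartbeats 2000000 in
theorem est_core [CompleteSpace W] {A B : Type*} [Nonempty A] [Nonempty B]
    (σm : ℝ → EuclideanSpace ℝ (Fin d) → Matrix (Fin d) (Fin d) ℝ)
    (f : ℝ → EuclideanSpace ℝ (Fin d) → A → B → EuclideanSpace ℝ (Fin d))
    (Γ : ℝ → EuclideanSpace ℝ (Fin d) → A → B → ℝ)
    (h h' : ℝ → EuclideanSpace ℝ (Fin d) → ℝ) (g : EuclideanSpace ℝ (Fin d) → ℝ)
    (ub vb : ℝ × EuclideanSpace ℝ (Fin d) → ℝ) (T R Cσ Lσ Lf Cf β lam : ℝ) (m : ℕ)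
    (hLf : 0 ≤ Lf) (hβ : 0 ≤ β) (hR : 0 ≤ R)
    (hsub : IsSubsolStar T σm f Γ h h' g ub)
    (hsup : IsSupersolStar T σm f Γ h h' g vb)
    (hσb : ∀ t ∈ Icc (0 : ℝ) T, ∀ x, ∀ i j, |σm t x i j| ≤ Cσ)
    (hσL : ∀ t ∈ Icc (0 : ℝ) T, ∀ x y, ∀ i j, |σm t x i j - σm t y i j| ≤ Lσ * ‖x - y‖)
    (hσinv : ∀ t ∈ Icc (0 : ℝ) T, ∀ x, IsUnit (σm t x))
    (hfL : ∀ t ∈ Icc (0 : ℝ) T, ∀ x y u v, ‖f t x u v - f t y u v‖ ≤ Lf * ‖x - y‖)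
    (hfG : ∀ t ∈ Icc (0 : ℝ) T, ∀ x u v, ‖f t x u v‖ ≤ Cf * (1 + ‖x‖))
    (hΓG : ∃ (CΓ : ℝ) (pΓ : ℕ), ∀ t ∈ Icc (0 : ℝ) T, ∀ x u v,
      |Γ t x u v| ≤ CΓ * (1 + ‖x‖ ^ pΓ))
    (hlam : 1 / 2 * (d * ((m + 2) * (4 * m + 6) * (d * Cσ ^ 2))) + 4 * (m + 2) * |Cf| ≤ lam)
    (e : (ℝ × EuclideanSpace ℝ (Fin d)) ≃L[ℝ] W) (θ : ℝ) (hθ : 0 < θ)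
    (he : ∀ s v, ‖e (s, v)‖ ^ 2 = (s / θ) ^ 2 + ‖v‖ ^ 2)
    (hei : ∀ s v v', ⟪e (s, v), e (0, v')⟫_ℝ = ⟪v, v'⟫_ℝ)
    (t t' : ℝ) (x y : EuclideanSpace ℝ (Fin d)) (ht : t ∈ Icc (0 : ℝ) T) (ht' : t' ∈ Icc (0 : ℝ) T)
    (hx : ‖x‖ < R) (hy : ‖y‖ < R) (q q' : W) (X : W →L[ℝ] W) (δ τ ε μ : ℝ)
    (hδ : 0 < δ) (hτ : 0 < τ) (hε : 0 < ε) (hμ : 0 < μ)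
    (hε1 : ε ≤ 1) (hτ1 : τ ≤ 1) (hδε : δ ≤ ε) (hδθ : δ ≤ ε * θ) (hμτ : μ ≤ ε * τ)
    (hμR : 2 * R * μ ≤ ε * τ)
    (hq : ‖q - q'‖ ≤ δ) (hq2 : ‖q - (1 / τ) • (e (t, x) - e (t', y))‖ ≤ δ)
    (hU : ∀ᶠ ξ in nhds (0 : W), e.symm (e (t, x) + ξ) ∈
      Icc (0 : ℝ) T ×ˢ Metric.closedBall (0 : EuclideanSpace ℝ (Fin d)) R →
      ub (e.symm (e (t, x) + ξ)) - β * psi lam T m (e.symm (e (t, x) + ξ)) ≤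
      ub (t, x) - β * psi lam T m (t, x) + ⟪q, ξ⟫_ℝ + 1 / 2 * ⟪X ξ, ξ⟫_ℝ + δ * ‖ξ‖ ^ 2)
    (hV : ∀ L : W →L[ℝ] W, ∀ᶠ η in nhds (0 : W), e.symm (e (t', y) + η) ∈
      Icc (0 : ℝ) T ×ˢ Metric.closedBall (0 : EuclideanSpace ℝ (Fin d)) R →
      vb (t', y) + β * psi lam T m (t', y) + ⟪q', η⟫_ℝ + 1 / 2 * ⟪X (L η), L η⟫_ℝ
        - ‖L η - η‖ ^ 2 / τ - δ * ‖L η‖ ^ 2 ≤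
      vb (e.symm (e (t', y) + η)) + β * psi lam T m (e.symm (e (t', y) + η)))
    (hσμ : ∀ i j, |σm t x i j - σm t' x i j| ≤ μ)
    (hfμ : ∀ a a', ‖f t x a a' - f t' x a a'‖ ≤ μ)
    (hΓε : ∀ a a', |Real.exp t * Γ t x a a' - Real.exp t' * Γ t' y a a'| ≤ ε)
    (hhε : |Real.exp t * h t x - Real.exp t' * h t' y| ≤ ε)
    (hh'ε : |Real.exp t * h' t x - Real.exp t' * h' t' y| ≤ ε)
    (hxy : ‖x - y‖ ^ 2 / τ ≤ 4 * ε) :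
    ub (t, x) - vb (t', y) ≤
      (4 + d * (2 * (d * Cσ ^ 2) + d * (2 + 8 * Lσ ^ 2)) + |Cf| * (1 + R) + 4 * Lf + 2 * R * Lf + 1)
        * ε := by
  have hConst : ε ≤ (4 + d * (2 * (d * Cσ ^ 2) + d * (2 + 8 * Lσ ^ 2)) + |Cf| * (1 + R) + 4 * Lf
      + 2 * R * Lf + 1) * ε := by
    have : 1 ≤ (4 + d * (2 * (d * Cσ ^ 2) + d * (2 + 8 * Lσ ^ 2)) + |Cf| * (1 + R) + 4 * Lf
      + 2 * R * Lf + 1) := by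
      have : 0 ≤ d * (2 * (d * Cσ ^ 2) + d * (2 + 8 * Lσ ^ 2)) + |Cf| * (1 + R) + 4 * Lf
        + 2 * R * Lf := by positivity
      linarith
    nlinarith
  -- the test functions
  set Y : W →L[ℝ] W := (1 / 2 : ℝ) • X + δ • ContinuousLinearMap.id ℝ W with hYdef
  have hY : ∀ ξ, ⟪Y ξ, ξ⟫_ℝ = 1 / 2 * ⟪X ξ, ξ⟫_ℝ + δ * ‖ξ‖ ^ 2 := by
    intro ξ
    simp only [hYdef, _root_.add_apply, _root_.smul_apply, inner_add_left, real_inner_smul_left,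
      ContinuousLinearMap.id_apply, real_inner_self_eq_norm_sq]
  set L : W →L[ℝ] W := Lmap e (Mmap (σm t x) (σm t' y)) with hLdef
  have hL : ∀ k, L (e (0, colv (σm t' y) k)) = e (0, colv (σm t x) k) := by
    intro k
    rw [hLdef, Lmap_apply, Mmap_col _ _ (hσinv t' ht' y)]
  obtain ⟨Y', hY'⟩ := exists_Y X L τ δ
  have hmax := local_max e T R t x hx β lam m q Y ub (by
    filter_upwards [hU] with ξ hξ hm
    have := hξ hm
    rw [hY]
    linarith)
  have hmin := local_min e T R t' y hy (-β) lam m q' Y' vb (by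
    filter_upwards [hV L] with ξ hξ hm
    have := hξ hm
    rw [hY']
    linarith)
  have hs := sub_cases _ _ _ (hsub.2 _ (tf_contDiff _ _ _ _ _ _ _ _) t ht x hmax)
  have hp := sup_cases _ _ _ (hsup.2 _ (tf_contDiff _ _ _ _ _ _ _ _) t' ht' y hmin)
  obtain ⟨hp1, hp2⟩ := hp
  rcases hs with hs | ⟨hs, hs'⟩
  · have := (abs_le.mp hhε).2
    linarith
  rcases hp2 with hp2 | hp2
  swap
  · have := (abs_le.mp hh'ε).2
    linarith
  obtain ⟨CΓ, pΓ, hΓG⟩ := hΓG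
  have h1 := pde_sub σm f Γ t x (hσinv t ht x) β lam T m _ q Y _ Cf _ _ (hfG t ht x)
    (hΓG t ht x) (fun k => colv_norm_sq _ k Cσ (hσb t ht x)) hβ hlam hs
  have h2 := pde_sup σm f Γ t' y (hσinv t' ht' y) β lam T m _ q' Y' _ Cf _ _ (hfG t' ht' y)
    (hΓG t' ht' y) (fun k => colv_norm_sq _ k Cσ (hσb t' ht' y)) hβ hlam hp2
  simp only [ContinuousLinearEquiv.coe_coe] at h1 h2
  obtain ⟨C, hC0, hC⟩ := G_bdd f Γ t x Cf _ (hfG t ht x) (hΓG t ht x) (e : _ →L[ℝ] W) q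
  obtain ⟨C', hC0', hC'⟩ := G_bdd f Γ t' y Cf _ (hfG t' ht' y) (hΓG t' ht' y) (e : _ →L[ℝ] W) q'
  simp only [ContinuousLinearEquiv.coe_coe] at hC hC'
  have hnorm0 : ∀ v, ‖e (0, v)‖ = ‖v‖ := by
    intro v
    have := he 0 v
    rw [zero_div, zero_pow two_ne_zero, zero_add] at this
    exact (sq_eq_sq₀ (norm_nonneg _) (norm_nonneg _)).mp this
  have hnorm1 : ‖e (1, 0)‖ = 1 / θ := by
    have := he 1 0
    rw [norm_zero, zero_pow two_ne_zero, add_zero] at this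
    exact (sq_eq_sq₀ (norm_nonneg _) (by positivity)).mp this
  have hxy2 : ‖x - y‖ ≤ 2 * R := (norm_sub_le x y).trans (by linarith)
  -- first term
  have t1 : ⟪q, e (1, 0)⟫_ℝ - ⟪q', e (1, 0)⟫_ℝ ≤ ε := by
    rw [← inner_sub_left]
    refine (real_inner_le_norm _ _).trans ?_
    rw [hnorm1, mul_one_div, div_le_iff₀ hθ]
    exact hq.trans hδθ
  -- second order term
  have t2 : ∑ k, ⟪Y (e (0, colv (σm t x) k)), e (0, colv (σm t x) k)⟫_ℝ -
      ∑ k, ⟪Y' (e (0, colv (σm t' y) k)), e (0, colv (σm t' y) k)⟫_ℝ ≤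
      d * ((2 * (d * Cσ ^ 2) + d * (2 + 8 * Lσ ^ 2)) * ε) := by
    rw [← Finset.sum_sub_distrib]
    have := Finset.sum_le_card_nsmul (Finset.univ : Finset (Fin d))
      (fun k => ⟪Y (e (0, colv (σm t x) k)), e (0, colv (σm t x) k)⟫_ℝ -
        ⟪Y' (e (0, colv (σm t' y) k)), e (0, colv (σm t' y) k)⟫_ℝ)
      ((2 * (d * Cσ ^ 2) + d * (2 + 8 * Lσ ^ 2)) * ε) (fun k _ => by
        rw [hY, hY', hL, ← map_sub]
        rw [show ((0 : ℝ), colv (σm t x) k) - (0, colv (σm t' y) k) =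
          (0, colv (σm t x - σm t' y) k) by rw [← colv_sub]; simp]
        rw [hnorm0, hnorm0]
        have a1 := colv_norm_sq _ k Cσ (hσb t ht x)
        have a2 := colv_norm_sq (σm t x - σm t' y) k (μ + Lσ * ‖x - y‖) (fun i j => by
          have b1 := hσμ i j
          have b2 := hσL t' ht' x y i j
          have b3 := abs_add_le (σm t x i j - σm t' x i j) (σm t' x i j - σm t' y i j)
          rw [sub_add_sub_cancel] at b3
          rw [Matrix.sub_apply]
          linarith)
        have a3 : (μ + Lσ * ‖x - y‖) ^ 2 ≤ 2 * μ ^ 2 + 2 * Lσ ^ 2 * ‖x - y‖ ^ 2 := by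
          nlinarith [sq_nonneg (μ - Lσ * ‖x - y‖)]
        have a4 : μ ^ 2 ≤ ε * τ := by
          have : μ ≤ 1 := hμτ.trans (mul_le_one₀ hε1 hτ.le hτ1)
          calc μ ^ 2 = μ * μ := sq μ
            _ ≤ 1 * (ε * τ) := mul_le_mul this hμτ hμ.le zero_le_one
            _ = ε * τ := one_mul _
        have a5 : ‖x - y‖ ^ 2 ≤ 4 * ε * τ := by rwa [div_le_iff₀ hτ] at hxy
        have a6 : (μ + Lσ * ‖x - y‖) ^ 2 ≤ (2 + 8 * Lσ ^ 2) * ε * τ := by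
          nlinarith [mul_le_mul_of_nonneg_left a5 (sq_nonneg Lσ)]
        have a7 : ‖colv (σm t x - σm t' y) k‖ ^ 2 / τ ≤ d * ((2 + 8 * Lσ ^ 2) * ε) := by
          rw [div_le_iff₀ hτ]
          refine a2.trans ?_
          rw [mul_assoc]
          gcongr
        have a8 : δ * ‖colv (σm t x) k‖ ^ 2 ≤ ε * (d * Cσ ^ 2) := by gcongr
        linarith)
    simpa using this
  have hqv : ∀ v, ⟪q, e (0, v)⟫_ℝ ≤ (‖x - y‖ / τ + δ) * ‖v‖ := by
    intro v
    have : ⟪q, e (0, v)⟫_ℝ = ⟪q - (1 / τ) • (e (t, x) - e (t', y)), e (0, v)⟫_ℝ +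
        1 / τ * ⟪x - y, v⟫_ℝ := by
      rw [inner_sub_left, real_inner_smul_left, ← map_sub, Prod.mk_sub_mk, hei]
      ring
    rw [this]
    have a1 := real_inner_le_norm (q - (1 / τ) • (e (t, x) - e (t', y))) (e (0, v))
    have a2 := real_inner_le_norm (x - y) v
    rw [hnorm0] at a1
    have a3 : ‖q - (1 / τ) • (e (t, x) - e (t', y))‖ * ‖v‖ ≤ δ * ‖v‖ := by gcongr
    have a4 : 1 / τ * ⟪x - y, v⟫_ℝ ≤ 1 / τ * (‖x - y‖ * ‖v‖) := by gcongr
    have a5 : 1 / τ * (‖x - y‖ * ‖v‖) = ‖x - y‖ / τ * ‖v‖ := by ring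
    linarith
  have t3 := infsup_le (fun a a' => ⟪q, e (0, f t x a a')⟫_ℝ + Real.exp t * Γ t x a a')
    (fun a a' => ⟪q', e (0, f t' y a a')⟫_ℝ + Real.exp t' * Γ t' y a a')
    ((|Cf| * (1 + R) + 4 * Lf + 2 * R * Lf + 3) * ε) (C + C')
    (fun a a' => by
      have b0 := (abs_le.mp (hΓε a a')).2
      have b1 : ‖f t x a a' - f t' y a a'‖ ≤ μ + Lf * ‖x - y‖ := by
        have c1 := hfμ a a'
        have c2 := hfL t' ht' x y a a'
        have c3 := norm_add_le (f t x a a' - f t' x a a') (f t' x a a' - f t' y a a')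
        rw [sub_add_sub_cancel] at c3
        linarith
      have b2 : ⟪q, e (0, f t x a a')⟫_ℝ - ⟪q', e (0, f t' y a a')⟫_ℝ =
          ⟪q, e (0, f t x a a' - f t' y a a')⟫_ℝ + ⟪q - q', e (0, f t' y a a')⟫_ℝ := by
        rw [show ((0 : ℝ), f t x a a' - f t' y a a') = (0, f t x a a') - (0, f t' y a a') by simp,
          map_sub, inner_sub_right, inner_sub_left]
        ring
      have b3 := hqv (f t x a a' - f t' y a a')
      have b4 : ⟪q - q', e (0, f t' y a a')⟫_ℝ ≤ ε * (|Cf| * (1 + R)) := by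
        refine (real_inner_le_norm _ _).trans ?_
        rw [hnorm0]
        have : ‖f t' y a a'‖ ≤ |Cf| * (1 + R) :=
          (hfG t' ht' y a a').trans (mul_le_mul (le_abs_self _) (by linarith)
            (by positivity) (abs_nonneg _))
        gcongr
        exact hq.trans hδε
      have b5 : (‖x - y‖ / τ + δ) * ‖f t x a a' - f t' y a a'‖ ≤
          (‖x - y‖ / τ + δ) * (μ + Lf * ‖x - y‖) := by gcongr
      have b6 : ‖x - y‖ / τ * μ ≤ ε := by
        rw [div_mul_eq_mul_div, div_le_iff₀ hτ]
        refine le_trans ?_ hμR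
        gcongr
      have b7 : ‖x - y‖ / τ * (Lf * ‖x - y‖) ≤ Lf * (4 * ε) := by
        calc _ = Lf * (‖x - y‖ ^ 2 / τ) := by ring
          _ ≤ _ := by gcongr
      have b8 : δ * μ ≤ ε := by
        have : μ ≤ 1 := hμτ.trans (mul_le_one₀ hε1 hτ.le hτ1)
        exact (mul_le_of_le_one_right hδ.le this).trans hδε
      have b9 : δ * (Lf * ‖x - y‖) ≤ ε * (Lf * (2 * R)) := by gcongr
      linarith)
    (fun a a' => (hC a a').trans (by linarith)) (fun a a' => (hC' a a').trans (by linarith))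
  linarith

end core5

theorem modulus_aux {α γ : Type*} [PseudoMetricSpace α] [PseudoMetricSpace γ] (K : Set α)
    (hK : IsCompact K) (F : α → γ) (hF : ContinuousOn F K) (ε : ℝ) (hε : 0 < ε) :
    ∃ ρ > 0, ∀ a ∈ K, ∀ b ∈ K, dist a b < ρ → dist (F a) (F b) < ε :=
  Metric.uniformContinuousOn_iff.mp (hK.uniformContinuousOn_of_continuous hF) ε hε

theorem growth_aux (C β r0 : ℝ) (hC : 0 ≤ C) (hβ : 0 < β) (m : ℕ) :
    ∃ R Cb : ℝ, 1 ≤ R ∧ r0 ≤ R ∧ 0 ≤ Cb ∧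
      (∀ r, 0 ≤ r → C * (1 + r ^ m) - β * (1 + r ^ 2) ^ (m + 2) ≤ Cb) ∧
      (∀ r, R ≤ r → C * (1 + r ^ m) - β * (1 + r ^ 2) ^ (m + 2) ≤ -Cb) := by
  have key : ∀ r, 0 ≤ r → C * (1 + r ^ m) - β * (1 + r ^ 2) ^ (m + 2) ≤
      (1 + r ^ 2) ^ m * (2 * C - β * (1 + r ^ 2) ^ 2) := by
    intro r hr
    have h1 : r ^ m ≤ (1 + r ^ 2) ^ m := by
      gcongr
      nlinarith [sq_nonneg (r - 1)]
    have h2 : 1 ≤ (1 + r ^ 2) ^ m := one_le_pow₀ (by nlinarith [sq_nonneg r])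
    have h3 : C * (1 + r ^ m) ≤ C * (2 * (1 + r ^ 2) ^ m) := by gcongr; linarith
    rw [pow_add]
    linarith
  set N1 : ℝ := 1 + 2 * C / β with hN1
  have hN1' : β * N1 = β + 2 * C := by rw [hN1]; field_simp
  have hN11 : 1 ≤ N1 := by rw [hN1]; have : 0 ≤ 2 * C / β := by positivity
                           linarith
  set Cb : ℝ := N1 ^ m * (2 * C) with hCb
  have hCb0 : 0 ≤ Cb := by positivity
  refine ⟨max (max 1 r0) ((2 * C + Cb) / β), Cb, (le_max_left _ _).trans (le_max_left _ _),
    (le_max_right _ _).trans (le_max_left _ _), hCb0, ?_, ?_⟩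
  · intro r hr
    refine (key r hr).trans ?_
    have hN : 1 ≤ 1 + r ^ 2 := by nlinarith [sq_nonneg r]
    rcases le_total (1 + r ^ 2) N1 with h | h
    · have h1 : (1 + r ^ 2) ^ m ≤ N1 ^ m := by gcongr
      have h2 : 2 * C - β * (1 + r ^ 2) ^ 2 ≤ 2 * C := by
        have : 0 ≤ β * (1 + r ^ 2) ^ 2 := by positivity
        linarith
      calc _ ≤ (1 + r ^ 2) ^ m * (2 * C) := by gcongr
        _ ≤ _ := by rw [hCb]; gcongr
    · have h1 : 2 * C - β * (1 + r ^ 2) ^ 2 ≤ 0 := by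
        have a1 : β * N1 ≤ β * (1 + r ^ 2) := by gcongr
        have a2 : β * (1 + r ^ 2) ≤ β * (1 + r ^ 2) ^ 2 := by
          gcongr
          nlinarith
        linarith
      exact (mul_nonpos_of_nonneg_of_nonpos (by positivity) h1).trans hCb0
  · intro r hr
    have hr1 : 1 ≤ r := ((le_max_left _ _).trans (le_max_left _ _)).trans hr
    have hr2 : (2 * C + Cb) / β ≤ r := (le_max_right _ _).trans hr
    rw [div_le_iff₀ hβ] at hr2
    refine (key r (by linarith)).trans ?_
    have hN : r ≤ (1 + r ^ 2) ^ 2 := by nlinarith [sq_nonneg r, sq_nonneg (r ^ 2)]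
    have h1 : 2 * C - β * (1 + r ^ 2) ^ 2 ≤ -Cb := by
      have a1 : β * r ≤ β * (1 + r ^ 2) ^ 2 := by gcongr
      linarith
    have h2 : 1 ≤ (1 + r ^ 2) ^ m := one_le_pow₀ (by nlinarith [sq_nonneg r])
    nlinarith

theorem exists_e {d : ℕ} (θ : ℝ) (hθ : 0 < θ) :
    ∃ e : (ℝ × EuclideanSpace ℝ (Fin d)) ≃L[ℝ] WithLp 2 (ℝ × EuclideanSpace ℝ (Fin d)),
      (∀ s v, ‖e (s, v)‖ ^ 2 = (s / θ) ^ 2 + ‖v‖ ^ 2) ∧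
      (∀ s v v', ⟪e (s, v), e (0, v')⟫_ℝ = ⟪v, v'⟫_ℝ) := by
  let l : (ℝ × EuclideanSpace ℝ (Fin d)) ≃ₗ[ℝ] WithLp 2 (ℝ × EuclideanSpace ℝ (Fin d)) :=
    { toFun := fun p => WithLp.toLp 2 (p.1 / θ, p.2)
      invFun := fun w => (θ * w.fst, w.snd)
      map_add' := by
        intro p p'
        apply WithLp.ofLp_injective
        simp [add_div]
      map_smul' := by
        intro c p
        apply WithLp.ofLp_injective
        simp [mul_div_assoc]
      left_inv := by
        intro p
        ext1
        · simp; field_simp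
        · simp
      right_inv := by
        intro w
        apply WithLp.ofLp_injective
        ext1
        · simp; field_simp
        · simp }
  refine ⟨l.toContinuousLinearEquiv, ?_, ?_⟩
  · intro s v
    have : l.toContinuousLinearEquiv (s, v) = WithLp.toLp 2 (s / θ, v) := rfl
    rw [this, WithLp.prod_norm_sq_eq_of_L2]
    simp [← abs_div]
  · intro s v v'
    have h1 : l.toContinuousLinearEquiv (s, v) = WithLp.toLp 2 (s / θ, v) := rfl
    have h2 : l.toContinuousLinearEquiv (0, v') = WithLp.toLp 2 (0 / θ, v') := rfl
    rw [h1, h2, WithLp.prod_inner_apply]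
    simp

theorem abs_le_of_sq_aux {a b : ℝ} (h : a ^ 2 ≤ b ^ 2) (hb : 0 ≤ b) : |a| ≤ b := by
  have := sq_le_sq.mp h
  rwa [abs_of_nonneg hb] at this

set_option maxHeartbeats 2000000 in
/-- Comparison principle (content of the proof of Theorem 5.1): a continuous viscosity
subsolution of polynomial growth of the transformed equation (★) is dominated by a continuous
viscosity supersolution of polynomial growth. -/
theorem stmt_16 {d : ℕ} (hd : 1 ≤ d) {A B : Type*}
    [MetricSpace A] [CompactSpace A] [Nonempty A]
    [MetricSpace B] [CompactSpace B] [Nonempty B]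
    (T : ℝ) (hT : 0 < T)
    (σm : ℝ → EuclideanSpace ℝ (Fin d) → Matrix (Fin d) (Fin d) ℝ)
    (hσc : ContinuousOn (fun p : ℝ × EuclideanSpace ℝ (Fin d) => σm p.1 p.2)
      (Icc 0 T ×ˢ (univ : Set (EuclideanSpace ℝ (Fin d)))))
    (hσb : ∃ Cσ : ℝ, ∀ t ∈ Icc (0 : ℝ) T, ∀ x, ∀ i j, |σm t x i j| ≤ Cσ)
    (hσL : ∃ Lσ : ℝ, ∀ t ∈ Icc (0 : ℝ) T, ∀ x y, ∀ i j,
      |σm t x i j - σm t y i j| ≤ Lσ * ‖x - y‖)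
    (hσinv : ∀ t ∈ Icc (0 : ℝ) T, ∀ x, IsUnit (σm t x))
    (hσinvc : ContinuousOn (fun p : ℝ × EuclideanSpace ℝ (Fin d) => (σm p.1 p.2)⁻¹)
      (Icc 0 T ×ˢ (univ : Set (EuclideanSpace ℝ (Fin d)))))
    (hσinvb : ∃ Cσ' : ℝ, ∀ t ∈ Icc (0 : ℝ) T, ∀ x, ∀ i j, |(σm t x)⁻¹ i j| ≤ Cσ')
    (f : ℝ → EuclideanSpace ℝ (Fin d) → A → B → EuclideanSpace ℝ (Fin d))
    (hfc : ContinuousOn (fun p : ℝ × EuclideanSpace ℝ (Fin d) × A × B =>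
      f p.1 p.2.1 p.2.2.1 p.2.2.2)
      (Icc 0 T ×ˢ (univ : Set (EuclideanSpace ℝ (Fin d) × A × B))))
    (hfL : ∃ Lf : ℝ, ∀ t ∈ Icc (0 : ℝ) T, ∀ x y u v, ‖f t x u v - f t y u v‖ ≤ Lf * ‖x - y‖)
    (Cf : ℝ) (hfG : ∀ t ∈ Icc (0 : ℝ) T, ∀ x u v, ‖f t x u v‖ ≤ Cf * (1 + ‖x‖))
    (Γ : ℝ → EuclideanSpace ℝ (Fin d) → A → B → ℝ)
    (hΓc : ContinuousOn (fun p : ℝ × EuclideanSpace ℝ (Fin d) × A × B =>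
      Γ p.1 p.2.1 p.2.2.1 p.2.2.2)
      (Icc 0 T ×ˢ (univ : Set (EuclideanSpace ℝ (Fin d) × A × B))))
    (hΓG : ∃ (CΓ : ℝ) (pΓ : ℕ), ∀ t ∈ Icc (0 : ℝ) T, ∀ x u v,
      |Γ t x u v| ≤ CΓ * (1 + ‖x‖ ^ pΓ))
    (hΓuc : ∀ ε > (0 : ℝ), ∃ δ > (0 : ℝ), ∀ (u u' : A) (v v' : B),
      dist u u' < δ → dist v v' < δ → ∀ t ∈ Icc (0 : ℝ) T, ∀ x,
        |Γ t x u v - Γ t x u' v'| < ε)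
    (hIsaacs : ∀ t ∈ Icc (0 : ℝ) T, ∀ x z : EuclideanSpace ℝ (Fin d),
      (⨅ u : A, ⨆ v : B, Hfun σm f Γ t x z u v) = ⨆ v : B, ⨅ u : A, Hfun σm f Γ t x z u v)
    (h h' : ℝ → EuclideanSpace ℝ (Fin d) → ℝ) (g : EuclideanSpace ℝ (Fin d) → ℝ)
    (hhc : ContinuousOn (fun p : ℝ × EuclideanSpace ℝ (Fin d) => h p.1 p.2)
      (Icc 0 T ×ˢ (univ : Set (EuclideanSpace ℝ (Fin d)))))
    (hh'c : ContinuousOn (fun p : ℝ × EuclideanSpace ℝ (Fin d) => h' p.1 p.2)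
      (Icc 0 T ×ˢ (univ : Set (EuclideanSpace ℝ (Fin d)))))
    (hgc : Continuous g)
    (hhG : ∃ (Ch : ℝ) (ph : ℕ), ∀ t ∈ Icc (0 : ℝ) T, ∀ x,
      |h t x| + |h' t x| + |g x| ≤ Ch * (1 + ‖x‖ ^ ph))
    (hhh' : ∀ t ∈ Icc (0 : ℝ) T, ∀ x, h t x < h' t x)
    (hhg : ∀ x, h T x ≤ g x ∧ g x ≤ h' T x)
    (ub vb : ℝ × EuclideanSpace ℝ (Fin d) → ℝ)
    (hubc : ContinuousOn ub (Icc 0 T ×ˢ (univ : Set (EuclideanSpace ℝ (Fin d)))))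
    (hvbc : ContinuousOn vb (Icc 0 T ×ˢ (univ : Set (EuclideanSpace ℝ (Fin d)))))
    (hgrowth : ∃ (C : ℝ) (γ : ℕ), ∀ t ∈ Icc (0 : ℝ) T, ∀ x,
      |ub (t, x)| + |vb (t, x)| ≤ C * (1 + ‖x‖ ^ γ))
    (hsub : IsSubsolStar T σm f Γ h h' g ub)
    (hsup : IsSupersolStar T σm f Γ h h' g vb) :
    ∀ t ∈ Icc (0 : ℝ) T, ∀ x : EuclideanSpace ℝ (Fin d), ub (t, x) ≤ vb (t, x) := by
  classical
  obtain ⟨Cσ, hσb⟩ := hσb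
  obtain ⟨Lσ, hσL⟩ := hσL
  obtain ⟨Lf0, hfL0⟩ := hfL
  obtain ⟨C, m, hgr⟩ := hgrowth
  set Lf := |Lf0| with hLfdef
  have hfL : ∀ t ∈ Icc (0 : ℝ) T, ∀ x y u v, ‖f t x u v - f t y u v‖ ≤ Lf * ‖x - y‖ :=
    fun t ht x y u v => (hfL0 t ht x y u v).trans (by gcongr; exact le_abs_self _)
  intro t0 ht0 x0
  by_contra hcon
  rw [not_le] at hcon
  set lam : ℝ := 1 / 2 * (d * ((m + 2) * (4 * m + 6) * (d * Cσ ^ 2))) + 4 * (m + 2) * |Cf|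
    with hlam
  have hlam0 : 0 ≤ lam := by positivity
  have hψpos : ∀ p : ℝ × EuclideanSpace ℝ (Fin d), 0 < psi lam T m p := by
    intro p; unfold psi; positivity
  have hψc : Continuous (psi (d := d) lam T m) := (psi_contDiff lam T m).continuous
  set β : ℝ := (ub (t0, x0) - vb (t0, x0)) / (4 * psi lam T m (t0, x0)) with hβdef
  have hβ : 0 < β := div_pos (by linarith) (by linarith [hψpos (t0, x0)])
  have hβψ : β * psi lam T m (t0, x0) = (ub (t0, x0) - vb (t0, x0)) / 4 := by
    rw [hβdef]; have := (hψpos (t0, x0)).ne'; field_simp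
  obtain ⟨R, Cb, hR1, hRx0, hCb0, hCb, hCbR⟩ := growth_aux |C| β ‖x0‖ (abs_nonneg _) hβ m
  have hψge : ∀ t ∈ Icc (0 : ℝ) T, ∀ x : EuclideanSpace ℝ (Fin d),
      (1 + ‖x‖ ^ 2) ^ (m + 2) ≤ psi lam T m (t, x) := by
    intro t ht x
    unfold psi
    have : 1 ≤ Real.exp (lam * (T - t)) :=
      Real.one_le_exp (mul_nonneg hlam0 (by linarith [ht.2]))
    exact le_mul_of_one_le_left (by positivity) this
  have hgr' : ∀ t ∈ Icc (0 : ℝ) T, ∀ x, |ub (t, x)| + |vb (t, x)| ≤ |C| * (1 + ‖x‖ ^ m) :=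
    fun t ht x => (hgr t ht x).trans (by gcongr; exact le_abs_self _)
  have hUle : ∀ t ∈ Icc (0 : ℝ) T, ∀ x, ub (t, x) - β * psi lam T m (t, x) ≤
      |C| * (1 + ‖x‖ ^ m) - β * (1 + ‖x‖ ^ 2) ^ (m + 2) := by
    intro t ht x
    have h1 := mul_le_mul_of_nonneg_left (hψge t ht x) hβ.le
    linarith [hgr' t ht x, le_abs_self (ub (t, x)), abs_nonneg (vb (t, x))]
  have hVle : ∀ t ∈ Icc (0 : ℝ) T, ∀ x, -(vb (t, x) + β * psi lam T m (t, x)) ≤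
      |C| * (1 + ‖x‖ ^ m) - β * (1 + ‖x‖ ^ 2) ^ (m + 2) := by
    intro t ht x
    have h1 := mul_le_mul_of_nonneg_left (hψge t ht x) hβ.le
    linarith [hgr' t ht x, neg_abs_le (vb (t, x)), abs_nonneg (ub (t, x))]
  set KK : Set (ℝ × EuclideanSpace ℝ (Fin d)) :=
    Icc (0 : ℝ) T ×ˢ Metric.closedBall (0 : EuclideanSpace ℝ (Fin d)) R with hKK
  have hKKc : IsCompact KK := isCompact_Icc.prod (isCompact_closedBall _ _)
  have hKKsub : KK ⊆ Icc (0 : ℝ) T ×ˢ (univ : Set (EuclideanSpace ℝ (Fin d))) :=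
    prod_mono le_rfl (subset_univ _)
  have hmemKK : ∀ t x, (t, x) ∈ KK ↔ t ∈ Icc (0 : ℝ) T ∧ ‖x‖ ≤ R := by
    intro t x; simp [hKK]
  have h0KK : (t0, x0) ∈ KK := (hmemKK _ _).mpr ⟨ht0, hRx0⟩
  have hUc : ContinuousOn (fun p => ub p - β * psi lam T m p) KK :=
    (hubc.mono hKKsub).sub (hψc.continuousOn.const_mul β |>.congr fun _ _ => rfl)
  have hVc : ContinuousOn (fun p => vb p + β * psi lam T m p) KK :=
    (hvbc.mono hKKsub).add (hψc.continuousOn.const_mul β |>.congr fun _ _ => rfl)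
  obtain ⟨⟨th, xh⟩, hhKK, hhmax⟩ := hKKc.exists_isMaxOn ⟨_, h0KK⟩ (hUc.sub hVc)
  set c0 : ℝ := (ub (th, xh) - β * psi lam T m (th, xh)) - (vb (th, xh) + β * psi lam T m (th, xh))
    with hc0
  have hmax : ∀ p ∈ KK, (ub p - β * psi lam T m p) - (vb p + β * psi lam T m p) ≤ c0 :=
    fun p hp => hhmax hp
  have hc0pos : 0 < c0 := by
    have := hmax _ h0KK
    linarith
  set Const : ℝ := 4 + d * (2 * (d * Cσ ^ 2) + d * (2 + 8 * Lσ ^ 2)) + |Cf| * (1 + R) + 4 * Lf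
    + 2 * R * Lf + 1 with hConst
  have hR0 : 0 ≤ R := by linarith
  have hConst0 : 0 ≤ Const := by positivity
  set ε : ℝ := min 1 (c0 / (2 * (Const + 1))) with hεdef
  have hε : 0 < ε := lt_min one_pos (by positivity)
  have hε1 : ε ≤ 1 := min_le_left _ _
  have hεc : (Const + 1) * ε ≤ c0 / 2 := by
    calc (Const + 1) * ε ≤ (Const + 1) * (c0 / (2 * (Const + 1))) := by
          gcongr; exact min_le_right _ _
      _ = c0 / 2 := by field_simp
  -- moduli
  obtain ⟨ρ1, hρ1, hm1⟩ := modulus_aux KK hKKc _ hVc ε hε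
  have hexp : ContinuousOn (fun p : ℝ × EuclideanSpace ℝ (Fin d) => Real.exp p.1) KK :=
    (Real.continuous_exp.comp continuous_fst).continuousOn
  obtain ⟨ρ2, hρ2, hm2⟩ := modulus_aux KK hKKc _ (hexp.mul (hhc.mono hKKsub)) ε hε
  obtain ⟨ρ3, hρ3, hm3⟩ := modulus_aux KK hKKc _ (hexp.mul (hh'c.mono hKKsub)) ε hε
  set K4 : Set (ℝ × EuclideanSpace ℝ (Fin d) × A × B) :=
    Icc (0 : ℝ) T ×ˢ (Metric.closedBall (0 : EuclideanSpace ℝ (Fin d)) R ×ˢ univ) with hK4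
  have hK4c : IsCompact K4 :=
    isCompact_Icc.prod ((isCompact_closedBall _ _).prod isCompact_univ)
  have hK4sub : K4 ⊆ Icc (0 : ℝ) T ×ˢ univ := prod_mono le_rfl (subset_univ _)
  have hexp4 : ContinuousOn (fun p : ℝ × EuclideanSpace ℝ (Fin d) × A × B => Real.exp p.1) K4 :=
    (Real.continuous_exp.comp continuous_fst).continuousOn
  have hmemK4 : ∀ t x a a', (t, x, a, a') ∈ K4 ↔ t ∈ Icc (0 : ℝ) T ∧ ‖x‖ ≤ R := by
    intro t x a a'; simp [hK4]
  obtain ⟨ρ4, hρ4, hm4⟩ := modulus_aux K4 hK4c _ (hexp4.mul (hΓc.mono hK4sub)) ε hε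
  obtain ⟨ρ, hρ, hρ1', hρle1, hρle2, hρle3, hρle4⟩ :
      ∃ ρ : ℝ, 0 < ρ ∧ ρ ≤ 1 ∧ ρ ≤ ρ1 ∧ ρ ≤ ρ2 ∧ ρ ≤ ρ3 ∧ ρ ≤ ρ4 := by
    refine ⟨min 1 (min (min ρ1 ρ2) (min ρ3 ρ4)), by positivity, by simp, ?_, ?_, ?_, ?_⟩
    · exact (min_le_right _ _).trans ((min_le_left _ _).trans (min_le_left _ _))
    · exact (min_le_right _ _).trans ((min_le_left _ _).trans (min_le_right _ _))
    · exact (min_le_right _ _).trans ((min_le_right _ _).trans (min_le_left _ _))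
    · exact (min_le_right _ _).trans ((min_le_right _ _).trans (min_le_right _ _))
  obtain ⟨τ, hτ, hτ1, hτρ⟩ : ∃ τ : ℝ, 0 < τ ∧ τ ≤ 1 ∧ 2 * τ * (2 * Cb + 1) < ρ ^ 2 := by
    refine ⟨min 1 (ρ ^ 2 / (4 * (2 * Cb + 1))), by positivity, min_le_left _ _, ?_⟩
    calc 2 * min 1 (ρ ^ 2 / (4 * (2 * Cb + 1))) * (2 * Cb + 1)
        ≤ 2 * (ρ ^ 2 / (4 * (2 * Cb + 1))) * (2 * Cb + 1) := by
          gcongr; exact min_le_right _ _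
      _ = ρ ^ 2 / 2 := by field_simp; norm_num
      _ < ρ ^ 2 := by linarith [pow_pos hρ 2]
  obtain ⟨μ, hμ, hμτ, hμR⟩ : ∃ μ : ℝ, 0 < μ ∧ μ ≤ ε * τ ∧ 2 * R * μ ≤ ε * τ := by
    have hετ : 0 < ε * τ := by positivity
    refine ⟨ε * τ / (2 * R + 1), by positivity, ?_, ?_⟩
    · exact div_le_self hετ.le (by linarith)
    · rw [mul_div_assoc', div_le_iff₀ (by positivity)]
      nlinarith
  have hσpi : ContinuousOn (fun (p : ℝ × EuclideanSpace ℝ (Fin d)) (i j : Fin d) =>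
      σm p.1 p.2 i j) KK := hσc.mono hKKsub
  obtain ⟨ρ5, hρ5, hm5⟩ := modulus_aux KK hKKc _ hσpi μ hμ
  obtain ⟨ρ6, hρ6, hm6⟩ := modulus_aux K4 hK4c _ (hfc.mono hK4sub) μ hμ
  obtain ⟨θ, hθ, hθ1, hθ5, hθ6⟩ : ∃ θ : ℝ, 0 < θ ∧ θ ≤ 1 ∧ θ ≤ ρ5 ∧ θ ≤ ρ6 :=
    ⟨min 1 (min ρ5 ρ6), by positivity, min_le_left _ _,
      (min_le_right _ _).trans (min_le_left _ _), (min_le_right _ _).trans (min_le_right _ _)⟩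
  obtain ⟨δ, hδ, hδε, hδθ, hδc⟩ : ∃ δ : ℝ, 0 < δ ∧ δ ≤ ε ∧ δ ≤ ε * θ ∧ δ ≤ c0 / 2 :=
    ⟨min ε (min (ε * θ) (c0 / 2)), by positivity, min_le_left _ _,
      (min_le_right _ _).trans (min_le_left _ _), (min_le_right _ _).trans (min_le_right _ _)⟩
  obtain ⟨e, he, hei⟩ := exists_e (d := d) θ hθ
  set K : Set (WithLp 2 (ℝ × EuclideanSpace ℝ (Fin d))) := e.symm ⁻¹' KK with hK
  have hKc : IsCompact K := e.symm.toHomeomorph.isCompact_preimage.mpr hKKc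
  have hmaps : MapsTo e.symm K KK := fun z hz => hz
  have hUK : ContinuousOn (fun z => ub (e.symm z) - β * psi lam T m (e.symm z)) K :=
    hUc.comp e.symm.continuous.continuousOn hmaps
  have hVK : ContinuousOn (fun z => vb (e.symm z) + β * psi lam T m (e.symm z)) K :=
    hVc.comp e.symm.continuous.continuousOn hmaps
  have hhK : e (th, xh) ∈ K := by
    simp only [hK, mem_preimage, ContinuousLinearEquiv.symm_apply_apply]; exact hhKK
  obtain ⟨z, hz, w, hw, q, q', X, hzw, hq, hq2, hUe, hVe⟩ :=
    sums_thm K hKc ⟨_, hhK⟩ _ _ hUK hVK τ δ hτ hδ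
  have hzw' := hzw _ hhK _ hhK
  simp only [ContinuousLinearEquiv.symm_apply_apply, sub_self, norm_zero] at hzw'
  obtain ⟨⟨t, x⟩, rfl⟩ := e.surjective z
  obtain ⟨⟨t', y⟩, rfl⟩ := e.surjective w
  have hz' : (t, x) ∈ KK := by
    simpa only [hK, mem_preimage, ContinuousLinearEquiv.symm_apply_apply] using hz
  have hw' : (t', y) ∈ KK := by
    simpa only [hK, mem_preimage, ContinuousLinearEquiv.symm_apply_apply] using hw
  simp only [ContinuousLinearEquiv.symm_apply_apply] at hzw' hUe hVe
  obtain ⟨ht, hxR⟩ := (hmemKK _ _).mp hz'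
  obtain ⟨ht', hyR⟩ := (hmemKK _ _).mp hw'
  set D : ℝ := ‖e (t, x) - e (t', y)‖ with hD
  have hD0 : 0 ≤ D := norm_nonneg _
  have hDsq : D ^ 2 = ((t - t') / θ) ^ 2 + ‖x - y‖ ^ 2 := by
    rw [hD, ← map_sub, Prod.mk_sub_mk, he]
  have hD2τ : 0 ≤ D ^ 2 / (2 * τ) := by positivity
  have hmain : c0 + D ^ 2 / (2 * τ) ≤ (ub (t, x) - β * psi lam T m (t, x)) -
      (vb (t', y) + β * psi lam T m (t', y)) + δ := by
    have : (0 : ℝ) ^ 2 / (2 * τ) = 0 := by norm_num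
    rw [this] at hzw'
    linarith
  have hxlt : ‖x‖ < R := by
    by_contra hge
    rw [not_lt] at hge
    have a1 := (hUle t ht x).trans (hCbR ‖x‖ hge)
    have a2 := (hVle t' ht' y).trans (hCb ‖y‖ (norm_nonneg _))
    linarith
  have hylt : ‖y‖ < R := by
    by_contra hge
    rw [not_lt] at hge
    have a1 := (hUle t ht x).trans (hCb ‖x‖ (norm_nonneg _))
    have a2 := (hVle t' ht' y).trans (hCbR ‖y‖ hge)
    linarith
  have hDρ : D < ρ := by
    have a1 := (hUle t ht x).trans (hCb ‖x‖ (norm_nonneg _))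
    have a2 := (hVle t' ht' y).trans (hCb ‖y‖ (norm_nonneg _))
    have a3 : D ^ 2 / (2 * τ) ≤ 2 * Cb + 1 := by linarith
    rw [div_le_iff₀ (by positivity)] at a3
    exact lt_of_pow_lt_pow_left₀ 2 hρ.le (by linarith)
  have htD : |t - t'| ≤ θ * D := by
    have a1 : |(t - t') / θ| ≤ D := abs_le_of_sq_aux (by linarith [sq_nonneg ‖x - y‖]) hD0
    rw [abs_div, abs_of_pos hθ, div_le_iff₀ hθ] at a1
    linarith
  have hxD : ‖x - y‖ ≤ D := by
    refine le_of_abs_le (abs_le_of_sq_aux ?_ hD0)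
    linarith [sq_nonneg ((t - t') / θ)]
  have htρ : |t - t'| < ρ :=
    (htD.trans (mul_le_of_le_one_left hD0 hθ1)).trans_lt hDρ
  have htθ : |t - t'| < θ :=
    htD.trans_lt (mul_lt_of_lt_one_right hθ (hDρ.trans_le hρ1'))
  have hdist : dist (t, x) (t', y) < ρ := by
    rw [Prod.dist_eq, max_lt_iff]
    exact ⟨by rwa [Real.dist_eq], by rw [dist_eq_norm]; linarith⟩
  have hdist4 : ∀ (a : A) (a' : B), dist (t, x, a, a') (t', y, a, a') < ρ := by
    intro a a'
    rw [Prod.dist_eq, max_lt_iff, Prod.dist_eq, max_lt_iff]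
    refine ⟨by rwa [Real.dist_eq], ?_, by simpa using hρ⟩
    rw [dist_eq_norm]; exact lt_of_le_of_lt hxD hDρ
  have hdistt : dist (t, x) (t', x) < θ := by
    rw [Prod.dist_eq, max_lt_iff]
    exact ⟨by rwa [Real.dist_eq], by simpa using hθ⟩
  have hdistt4 : ∀ (a : A) (a' : B), dist (t, x, a, a') (t', x, a, a') < θ := by
    intro a a'
    rw [Prod.dist_eq, max_lt_iff]
    exact ⟨by rwa [Real.dist_eq], by simpa using hθ⟩
  have hDτ : D ^ 2 / (2 * τ) ≤ 2 * ε := by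
    have a1 := hmax _ hz'
    have a2 := hm1 _ hz' _ hw' (hdist.trans_le hρle1)
    rw [Real.dist_eq] at a2
    have a3 := (abs_lt.mp a2).2
    linarith
  have hxy : ‖x - y‖ ^ 2 / τ ≤ 4 * ε := by
    have a1 : ‖x - y‖ ^ 2 ≤ D ^ 2 := by gcongr
    rw [div_le_iff₀ (by positivity)] at hDτ ⊢
    linarith
  have hfinal := est_core σm f Γ h h' g ub vb T R Cσ Lσ Lf Cf β lam m (abs_nonneg _) hβ.le hR0
    hsub hsup hσb hσL hσinv hfL hfG hΓG le_rfl e θ hθ he hei t t' x y ht ht' hxlt hylt q q' X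
    δ τ ε μ hδ hτ hε hμ hε1 hτ1 hδε hδθ hμτ hμR hq hq2 hUe hVe
    (fun i j => by
      have a1 := (hm5 _ hz' (t', x) ((hmemKK _ _).mpr ⟨ht', hxR⟩) (hdistt.trans_le hθ5)).le
      have a2 := ((dist_pi_le_iff hμ.le).mp a1 i)
      have a3 := ((dist_pi_le_iff hμ.le).mp a2 j)
      rwa [Real.dist_eq] at a3)
    (fun a a' => by
      have a1 := (hm6 (t, x, a, a') ((hmemK4 _ _ _ _).mpr ⟨ht, hxR⟩) (t', x, a, a')
        ((hmemK4 _ _ _ _).mpr ⟨ht', hxR⟩) ((hdistt4 a a').trans_le hθ6)).le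
      rwa [dist_eq_norm] at a1)
    (fun a a' => by
      have a1 := (hm4 (t, x, a, a') ((hmemK4 _ _ _ _).mpr ⟨ht, hxR⟩) (t', y, a, a')
        ((hmemK4 _ _ _ _).mpr ⟨ht', hyR⟩) ((hdist4 a a').trans_le hρle4)).le
      rwa [Real.dist_eq] at a1)
    (by
      have a1 := (hm2 _ hz' _ hw' (hdist.trans_le hρle2)).le
      rwa [Real.dist_eq] at a1)
    (by
      have a1 := (hm3 _ hz' _ hw' (hdist.trans_le hρle3)).le
      rwa [Real.dist_eq] at a1)
    hxy
  have b1 : 0 ≤ β * psi lam T m (t, x) := mul_nonneg hβ.le (hψpos _).le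
  have b2 : 0 ≤ β * psi lam T m (t', y) := mul_nonneg hβ.le (hψpos _).le
  have b3 : (Const + 1) * ε = Const * ε + ε := by ring
  linarith
end
end
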